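/- arXiv:1409.3117 — 3 statements merged into one kernel-verified Lean document; each statement's English description precedes it below -/
import Mathlib

section
/- Let d ≥ 1 and let m denote the normalized Haar measure on the d-dimensional torus 𝕋^d (the d-fold product of the unit circle in ℂ with the product of normalized Lebesgue measures). Then the integral ∫_{𝕋^d} |z₁ + z₂ + ⋯ + z_d|/√d dm(z) converges to √π/2 as d → ∞. -/
open MeasureTheory

noncomputable instance : MeasurableSpace Circle := borel Circle
instance : BorelSpace Circle := ⟨rfl⟩

/-- The normalized Lebesgue (arc-length) measure on the unit circle `{z : ℂ | |z| = 1}`,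
a probability measure; it is the normalized Haar measure of the circle group. -/
noncomputable def circleHaar : Measure Circle :=
  (ENNReal.ofReal (2 * Real.pi))⁻¹ •
    (volume.restrict (Set.Ioc 0 (2 * Real.pi))).map Circle.exp

/-- The normalized Haar measure on the `d`-dimensional torus `𝕋^d`, i.e. the product of the
normalized Lebesgue (arc-length) measures on each circle factor. -/
noncomputable def torusHaar (d : ℕ) : Measure (Fin d → Circle) :=
  Measure.pi fun _ => circleHaar

open ProbabilityTheory Filter Topology

lemma integral_circleHaar (f : Circle → ℝ) (hf : Continuous f) :
    ∫ z, f z ∂circleHaar = (2 * Real.pi)⁻¹ * ∫ θ in (0:ℝ)..(2 * Real.pi), f (Circle.exp θ) := by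
  have hpi : (0:ℝ) ≤ 2 * Real.pi := by positivity
  rw [circleHaar, integral_smul_measure, integral_map, intervalIntegral.integral_of_le hpi]
  · simp [Real.pi_pos.le]
  · exact Circle.exp.continuous.measurable.aemeasurable
  · exact hf.measurable.aestronglyMeasurable

instance isProb_circleHaar : IsProbabilityMeasure circleHaar := by
  constructor
  rw [circleHaar, Measure.smul_apply, Measure.map_apply Circle.exp.continuous.measurable
    MeasurableSet.univ]
  simp only [Set.preimage_univ, Measure.restrict_apply MeasurableSet.univ, Set.univ_inter,
    Real.volume_Ioc, sub_zero, smul_eq_mul]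
  apply ENNReal.inv_mul_cancel
  · simp [Real.pi_pos]
  · exact ENNReal.ofReal_ne_top

instance isProb_torusHaar (d : ℕ) : IsProbabilityMeasure (torusHaar d) := by
  unfold torusHaar; infer_instance

lemma circle_rot (a : Circle) : MeasurePreserving (fun z => a * z) circleHaar circleHaar := by
  have hm : Measurable (fun z : Circle => a * z) := (continuous_const_mul a).measurable
  refine ⟨hm, ?_⟩
  have := Measure.isProbabilityMeasure_map (μ := circleHaar) hm.aemeasurable
  apply ext_of_forall_integral_eq_of_IsFiniteMeasure
  intro f
  rw [integral_map hm.aemeasurable f.continuous.measurable.aestronglyMeasurable,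
    integral_circleHaar _ f.continuous,
    integral_circleHaar (fun x => f (a * x)) (f.continuous.comp (continuous_const_mul a))]
  congr 1
  obtain ⟨α, rfl⟩ : ∃ α, Circle.exp α = a := ⟨_, Circle.exp_arg a⟩
  simp_rw [← Circle.exp_add]
  have hper : Function.Periodic (fun θ => f (Circle.exp θ)) (2 * Real.pi) := by
    intro θ; simp
  have h1 := intervalIntegral.integral_comp_add_left (a := 0) (b := 2 * Real.pi)
    (fun θ => f (Circle.exp θ)) α
  have h2 := hper.intervalIntegral_add_eq α 0
  simp only [zero_add, add_zero] at *
  rw [h1, h2]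

lemma integral_abs_cos : ∫ θ in (0:ℝ)..(2 * Real.pi), |Real.cos θ| = 4 := by
  have hper : Function.Periodic (fun θ => |Real.cos θ|) (2 * Real.pi) := by
    intro θ; simp
  have h2 := hper.intervalIntegral_add_eq (-(Real.pi/2)) 0
  rw [zero_add] at h2
  rw [← h2]
  have hc : Continuous (fun θ => |Real.cos θ|) := by fun_prop
  rw [← intervalIntegral.integral_add_adjacent_intervals (b := Real.pi/2)
    (hc.intervalIntegrable _ _) (hc.intervalIntegrable _ _)]
  have e1 : ∫ θ in (-(Real.pi/2))..(Real.pi/2), |Real.cos θ|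
      = ∫ θ in (-(Real.pi/2))..(Real.pi/2), Real.cos θ := by
    apply intervalIntegral.integral_congr
    intro x hx
    rw [Set.uIcc_of_le (by linarith [Real.pi_pos])] at hx
    exact abs_of_nonneg (Real.cos_nonneg_of_mem_Icc hx)
  have e2 : ∫ θ in (Real.pi/2)..(-(Real.pi/2) + 2 * Real.pi), |Real.cos θ|
      = ∫ θ in (Real.pi/2)..(-(Real.pi/2) + 2 * Real.pi), -Real.cos θ := by
    apply intervalIntegral.integral_congr
    intro x hx
    rw [Set.uIcc_of_le (by linarith [Real.pi_pos])] at hx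
    exact abs_of_nonpos (Real.cos_nonpos_of_pi_div_two_le_of_le hx.1 (by linarith [hx.2]))
  rw [e1, e2, intervalIntegral.integral_neg, integral_cos, integral_cos, Real.sin_add_two_pi]
  simp
  norm_num

lemma coe_exp_re (θ : ℝ) : ((Circle.exp θ : Circle) : ℂ).re = Real.cos θ := by
  rw [Circle.coe_exp, Complex.exp_ofReal_mul_I_re]

lemma circle_abs_re (c : ℂ) : ∫ w : Circle, |((w:ℂ) * c).re| ∂circleHaar = 2 / Real.pi * ‖c‖ := by
  have hcont (c : ℂ) : Continuous (fun w : Circle => |((w:ℂ) * c).re|) := by fun_prop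
  have hmul : c = ‖c‖ * (Circle.exp (Complex.arg c) : ℂ) := by
    rw [Circle.coe_exp, Complex.norm_mul_exp_arg_mul_I]
  have h1 := (circle_rot (Circle.exp (Complex.arg c))).integral_comp' (f := by exact
    (Homeomorph.mulLeft (Circle.exp (Complex.arg c))).toMeasurableEquiv) (fun w : Circle => |((w:ℂ) * ‖c‖).re|)
  have h2 : ∫ w : Circle, |((w:ℂ) * c).re| ∂circleHaar =
      ∫ w : Circle, |((w:ℂ) * ‖c‖).re| ∂circleHaar := by
    rw [← h1]
    congr 1
    ext w
    conv_lhs => rw [hmul]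
    simp only [Homeomorph.toMeasurableEquiv_coe, Homeomorph.coe_mulLeft, Circle.coe_mul]
    congr 2
    ring
  rw [h2, integral_circleHaar _ (hcont _)]
  simp only [Complex.re_mul_ofReal, coe_exp_re, abs_mul, abs_norm]
  rw [intervalIntegral.integral_mul_const, integral_abs_cos]
  field_simp
  norm_num

lemma torus_reduce (d : ℕ) : ∫ z : Fin d → Circle, ‖∑ j, (z j : ℂ)‖ ∂(torusHaar d) =
    Real.pi / 2 * ∫ z : Fin d → Circle, |∑ j, (z j : ℂ).re| ∂(torusHaar d) := by
  have hrot (w : Circle) : ∫ z : Fin d → Circle, |((w:ℂ) * ∑ j, (z j : ℂ)).re| ∂(torusHaar d) =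
      ∫ z : Fin d → Circle, |∑ j, (z j : ℂ).re| ∂(torusHaar d) := by
    have hp : MeasurePreserving (fun (z : Fin d → Circle) i => w * z i) (torusHaar d) (torusHaar d) :=
      measurePreserving_pi _ _ (fun _ => circle_rot w)
    conv_rhs => rw [← hp.map_eq]
    rw [integral_map hp.measurable.aemeasurable]
    · simp [Finset.mul_sum]
    · exact Continuous.aestronglyMeasurable (by fun_prop)
  have hfub : ∫ w : Circle, ∫ z : Fin d → Circle, |((w:ℂ) * ∑ j, (z j : ℂ)).re| ∂(torusHaar d) ∂circleHaar =
      ∫ z : Fin d → Circle, ∫ w : Circle, |((w:ℂ) * ∑ j, (z j : ℂ)).re| ∂circleHaar ∂(torusHaar d) := by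
    apply integral_integral_swap
    refine Integrable.of_bound (C := d) (Continuous.aestronglyMeasurable (by fun_prop)) ?_
    refine ae_of_all _ fun p => ?_
    rw [Function.uncurry, Real.norm_eq_abs, abs_abs]
    refine (Complex.abs_re_le_norm _).trans ?_
    rw [norm_mul, Circle.norm_coe, one_mul]
    calc ‖∑ j, ((p.2 j : Circle) : ℂ)‖ ≤ ∑ j, ‖((p.2 j : Circle) : ℂ)‖ := norm_sum_le _ _
      _ = ∑ j : Fin d, (1 : ℝ) := Finset.sum_congr rfl fun j _ => Circle.norm_coe (p.2 j)
      _ = d := by simp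
      _ ≤ d := le_rfl
  simp_rw [hrot, circle_abs_re] at hfub
  rw [integral_const_mul] at hfub
  simp only [integral_const, probReal_univ, one_smul] at hfub
  rw [hfub]
  field_simp

lemma gauss_abs : ∫ x, |x| ∂(gaussianReal 0 1) = Real.sqrt (2 / Real.pi) := by
  rw [integral_gaussianReal_eq_integral_smul one_ne_zero]
  have h := integral_comp_abs (f := fun x => gaussianPDFReal 0 1 x * x)
  have h2 := integral_rpow_mul_exp_neg_mul_rpow (p := 2) (q := 1) (b := 1/2) (by norm_num)
    (by norm_num) (by norm_num)
  simp only [gaussianPDFReal, smul_eq_mul, sub_zero, sq_abs, NNReal.coe_one, mul_one] at *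
  rw [h]
  have e : ∫ x in Set.Ioi (0:ℝ), (√(2 * Real.pi))⁻¹ * Real.exp (-x ^ 2 / 2) * x =
     ∫ x in Set.Ioi (0:ℝ), (√(2 * Real.pi))⁻¹ * (x ^ (1:ℝ) * Real.exp (-(1/2) * x ^ (2:ℝ))) := by
    congr 1; ext x
    rw [Real.rpow_one, Real.rpow_two, show -x^2/2 = -(1/2) * x^2 by ring]; ring
  rw [e, integral_const_mul, h2]
  norm_num
  have := Real.mul_self_sqrt (show (0:ℝ) ≤ 2 by norm_num)
  field_simp
  nlinarith

lemma trunc_bound {Ω : Type*} [MeasurableSpace Ω] {P : Measure Ω} [IsProbabilityMeasure P]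
    {Y : Ω → ℝ} (hY : MemLp Y 2 P) (h : ∫ ω, Y ω ^ 2 ∂P ≤ 1) {M : ℝ} (hM : 0 < M) :
    |∫ ω, |Y ω| ∂P - ∫ ω, min |Y ω| M ∂P| ≤ 1 / M := by
  have hi : Integrable (fun ω => |Y ω|) P := (hY.integrable (by norm_num)).abs
  have hi2 : Integrable (fun ω => min |Y ω| M) P := hi.inf (integrable_const M)
  have hsq : Integrable (fun ω => Y ω ^ 2) P := hY.integrable_sq
  rw [← integral_sub hi hi2, abs_of_nonneg (integral_nonneg fun ω => by simp)]
  calc _ ≤ ∫ ω, Y ω ^ 2 / M ∂P := by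
        apply integral_mono (hi.sub hi2) (hsq.div_const M)
        intro ω
        simp only [Pi.sub_apply]
        rw [← sq_abs, le_div_iff₀ hM]
        rcases le_total |Y ω| M with h | h
        · simp [h]; positivity
        · rw [min_eq_right h]; nlinarith
    _ ≤ 1 / M := by
        rw [integral_div]; gcongr

lemma tendsto_abs {Ω Ω' : Type*} [MeasurableSpace Ω] {P : Measure Ω} [IsProbabilityMeasure P]
    [MeasurableSpace Ω'] {P' : Measure Ω'} [IsProbabilityMeasure P']
    {Y : ℕ → Ω → ℝ} {Z : Ω' → ℝ} (hT : TendstoInDistribution Y atTop Z (fun _ => P) P')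
    (hY : ∀ n, MemLp (Y n) 2 P) (h : ∀ n, ∫ ω, Y n ω ^ 2 ∂P ≤ 1)
    (hZ : MemLp Z 2 P') (hZ1 : ∫ ω, Z ω ^ 2 ∂P' ≤ 1) :
    Tendsto (fun n => ∫ ω, |Y n ω| ∂P) atTop (𝓝 (∫ ω, |Z ω| ∂P')) := by
  have key (M : ℝ) (hM : 0 < M) : Tendsto (fun n => ∫ ω, min |Y n ω| M ∂P) atTop
      (𝓝 (∫ ω, min |Z ω| M ∂P')) := by
    let g : BoundedContinuousFunction ℝ ℝ := BoundedContinuousFunction.ofNormedAddCommGroup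
      (fun x => min |x| M) (by fun_prop) M (by
        intro x
        rw [Real.norm_eq_abs, abs_of_nonneg (le_min (abs_nonneg x) hM.le)]
        exact min_le_right _ _)
    have hg : Continuous (fun x : ℝ => min |x| M) := by fun_prop
    have := ProbabilityMeasure.tendsto_iff_forall_integral_tendsto.1 hT.tendsto g
    simp only [ProbabilityMeasure.coe_mk, g, BoundedContinuousFunction.coe_ofNormedAddCommGroup] at this
    rw [integral_map hT.aemeasurable_limit hg.aestronglyMeasurable] at this
    refine this.congr fun n => ?_
    rw [integral_map (hT.forall_aemeasurable n) hg.aestronglyMeasurable]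
  rw [Metric.tendsto_atTop]
  intro ε hε
  have hM : 0 < 3 / ε := by positivity
  obtain ⟨N, hN⟩ := Metric.tendsto_atTop.1 (key (3/ε) hM) (ε/3) (by positivity)
  refine ⟨N, fun n hn => ?_⟩
  have a1 := trunc_bound (hY n) (h n) hM
  have a2 := trunc_bound hZ hZ1 hM
  have a3 := hN n hn
  rw [Real.dist_eq] at a3 ⊢
  rw [one_div_div] at a1 a2
  rw [abs_le] at a1 a2
  rw [abs_lt] at a3 ⊢
  constructor <;> linarith [a1.1, a1.2, a2.1, a2.2, a3.1, a3.2]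

lemma circle_re_mean : ∫ z : Circle, √2 * (z:ℂ).re ∂circleHaar = 0 := by
  rw [integral_circleHaar _ (by fun_prop)]
  simp

lemma circle_re_sq : ∫ z : Circle, (√2 * (z:ℂ).re) ^ 2 ∂circleHaar = 1 := by
  rw [integral_circleHaar _ (by fun_prop)]
  simp [mul_pow, integral_cos_sq]
  field_simp

lemma clt_abs : Tendsto (fun n : ℕ => ∫ ω : ℕ → Circle,
    |(√n)⁻¹ * ∑ k ∈ Finset.range n, √2 * ((ω k : Circle) : ℂ).re|
      ∂(Measure.infinitePi (fun _ : ℕ => circleHaar))) atTop (𝓝 (√(2 / Real.pi))) := by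
  set P := Measure.infinitePi (fun _ : ℕ => circleHaar) with hP
  let X : ℕ → (ℕ → Circle) → ℝ := fun k ω => √2 * ((ω k : Circle) : ℂ).re
  have hc : Continuous (fun z : Circle => √2 * (z : ℂ).re) := by fun_prop
  have hmX (k) : Measurable (X k) := hc.measurable.comp (measurable_pi_apply k)
  have hev (k : ℕ) : MeasurePreserving (fun ω : ℕ → Circle => ω k) P circleHaar :=
    measurePreserving_eval_infinitePi _ k
  have hev_int (k : ℕ) (f : Circle → ℝ) (hf : Continuous f) :
      ∫ ω, f (ω k) ∂P = ∫ z, f z ∂circleHaar := by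
    rw [← (hev k).map_eq, integral_map (hev k).measurable.aemeasurable
      hf.measurable.aestronglyMeasurable]
  have h0 (k) : P[X k] = 0 := (hev_int k _ hc).trans circle_re_mean
  have h1 (k) : P[X k ^ 2] = 1 := (hev_int k _ (hc.pow 2)).trans circle_re_sq
  have hindep : iIndepFun X P := iIndepFun_infinitePi (X := fun _ (z : Circle) => √2 * (z : ℂ).re)
    (fun _ => hc.measurable)
  have hident (i : ℕ) : IdentDistrib (X i) (X 0) P P := by
    have : IdentDistrib (fun ω : ℕ → Circle => ω i) (fun ω => ω 0) P P :=
      ⟨(hev i).measurable.aemeasurable, (hev 0).measurable.aemeasurable,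
        by rw [(hev i).map_eq, (hev 0).map_eq]⟩
    exact this.comp hc.measurable
  have hL2 (k) : MemLp (X k) 2 P := by
    refine MemLp.of_bound (hmX k).aestronglyMeasurable (√2) (ae_of_all _ fun ω => ?_)
    simp only [X, norm_mul, Real.norm_eq_abs]
    rw [abs_of_nonneg (Real.sqrt_nonneg 2)]
    have := Complex.abs_re_le_norm (ω k : ℂ)
    rw [Circle.norm_coe] at this
    nlinarith [Real.sqrt_nonneg 2]
  have hclt := tendstoInDistribution_inv_sqrt_mul_sum (P' := gaussianReal 0 1) (Y := id)
    HasLaw.id (h0 0) (h1 0) hindep hident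
  have hG : MemLp (id : ℝ → ℝ) 2 (gaussianReal 0 1) := memLp_id_gaussianReal 2
  have hS (n : ℕ) : MemLp (fun ω => ∑ k ∈ Finset.range n, X k ω) 2 P :=
    memLp_finsetSum _ fun k _ => hL2 k
  have := tendsto_abs hclt (fun n => (hS n).const_mul _) ?_ hG ?_
  · simpa [gauss_abs] using this
  · intro n
    have hv := IndepFun.variance_sum (s := Finset.range n) (fun i _ => hL2 i)
      (fun i _ j _ hij => hindep.indepFun hij)
    have hvX (k) : variance (X k) P = 1 := by
      rw [variance_of_integral_eq_zero (hmX k).aemeasurable (h0 k)]; exact h1 k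
    have hs0 : ∫ ω, (∑ k ∈ Finset.range n, X k) ω ∂P = 0 := by
      simp only [Finset.sum_apply]
      rw [integral_finsetSum _ (fun k _ => (hL2 k).integrable (by norm_num))]
      exact Finset.sum_eq_zero fun k _ => h0 k
    rw [variance_of_integral_eq_zero (Finset.aemeasurable_sum _ fun k _ => (hmX k).aemeasurable) hs0] at hv
    simp only [hvX, Finset.sum_apply, Finset.sum_const, Finset.card_range, nsmul_eq_mul, mul_one] at hv
    simp only [mul_pow, integral_const_mul, hv]
    rw [inv_pow, Real.sq_sqrt (by positivity)]
    exact inv_mul_le_one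
  · have := variance_id_gaussianReal (μ := 0) (v := 1)
    rw [variance_of_integral_eq_zero aemeasurable_id (by simp)] at this
    simpa using this.le

lemma torus_transfer (d : ℕ) : ∫ z : Fin d → Circle, |∑ j, (z j : ℂ).re| ∂(torusHaar d) =
    ∫ ω : ℕ → Circle, |∑ k ∈ Finset.range d, ((ω k : Circle) : ℂ).re|
      ∂(Measure.infinitePi (fun _ : ℕ => circleHaar)) := by
  have h := Measure.map_infinitePi_infinitePi_of_inj (P := fun _ : ℕ => circleHaar)
    (f := fun i : Fin d => (i : ℕ)) Fin.val_injective
  rw [Measure.infinitePi_eq_pi (ι := Fin d)] at h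
  rw [torusHaar, ← h, integral_map (Measurable.aemeasurable (measurable_pi_lambda _ fun i => measurable_pi_apply _))]
  · simp_rw [Finset.sum_range]
  · exact Continuous.aestronglyMeasurable (by fun_prop)

/-- Central limit theorem in L¹ for Steinhaus variables: the integral of
`|z₁ + ⋯ + z_d|/√d` over the torus `𝕋^d` with respect to the normalized Haar
measure tends to `√π/2` as `d → ∞`. -/
theorem steinhaus_clt_L1 :
    Filter.Tendsto
      (fun d : ℕ => ∫ z : Fin d → Circle, ‖∑ j, (z j : ℂ)‖ / Real.sqrt d ∂(torusHaar d))
      Filter.atTop (nhds (Real.sqrt Real.pi / 2)) := by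
  have h := clt_abs.const_mul (Real.pi / 2 / √2)
  have hconst : Real.pi / 2 / √2 * √(2 / Real.pi) = Real.sqrt Real.pi / 2 := by
    rw [Real.sqrt_div (by norm_num)]
    have h1 := Real.mul_self_sqrt Real.pi_pos.le
    have h2 : 0 < √Real.pi := Real.sqrt_pos.2 Real.pi_pos
    field_simp
    nlinarith
  rw [hconst] at h
  refine h.congr fun d => ?_
  rw [integral_div, torus_reduce, torus_transfer]
  simp only [← Finset.mul_sum, abs_mul, integral_const_mul]
  rw [abs_of_nonneg (Real.sqrt_nonneg 2), abs_of_nonneg (inv_nonneg.2 (Real.sqrt_nonneg _))]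
  field_simp
end

section
/- Let d ≥ 1, let m be the normalized Haar measure on 𝕋^d, and let b = (b₁, …, b_d) ∈ ℂ^d. Then ∫_{𝕋^d} |b₁ z₁ + b₂ z₂ + ⋯ + b_d z_d| dm(z) ≥ (√π/2) · (|b₁|² + ⋯ + |b_d|²)^{1/2}. (This is the sharp Khintchine inequality for Steinhaus variables at exponent 1.) -/
open MeasureTheory

namespace KS
open MeasureTheory Set Filter Topology

lemma circleHaar_univ : circleHaar Set.univ = 1 := by
  have h := Circle.exp.continuous.measurable
  rw [circleHaar, Measure.smul_apply, Measure.map_apply h MeasurableSet.univ]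
  simp only [preimage_univ, Measure.restrict_apply_univ, Real.volume_Ioc, sub_zero, smul_eq_mul]
  apply ENNReal.inv_mul_cancel
  · simp [Real.pi_pos]
  · exact ENNReal.ofReal_ne_top

instance : IsProbabilityMeasure circleHaar := ⟨circleHaar_univ⟩

instance (d : ℕ) : IsProbabilityMeasure (torusHaar d) := by
  unfold torusHaar; infer_instance

lemma integral_circle {E : Type*} [NormedAddCommGroup E] [NormedSpace ℝ E]
    {f : Circle → E} (hf : Continuous f) [SecondCountableTopology E] :
    ∫ z, f z ∂circleHaar = (2 * Real.pi)⁻¹ • ∫ θ in (0:ℝ)..(2 * Real.pi), f (Circle.exp θ) := by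
  have h := Circle.exp.continuous.measurable
  rw [circleHaar, integral_smul_measure, integral_map h.aemeasurable,
    intervalIntegral.integral_of_le (by positivity)]
  · congr 1
    rw [ENNReal.toReal_inv, ENNReal.toReal_ofReal (by positivity)]
  · borelize E
    exact hf.aestronglyMeasurable

lemma mp_mul (u : Circle) : MeasurePreserving (fun z => u * z) circleHaar circleHaar := by
  have hc : Continuous (fun z : Circle => u * z) := by fun_prop
  refine ⟨hc.measurable, ?_⟩
  have : IsProbabilityMeasure (circleHaar.map (fun z => u * z)) :=
    Measure.isProbabilityMeasure_map hc.measurable.aemeasurable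
  refine MeasureTheory.ext_of_forall_integral_eq_of_IsFiniteMeasure fun f => ?_
  rw [integral_map hc.measurable.aemeasurable f.continuous.aestronglyMeasurable,
    integral_circle (f := fun x => f (u * x)) (f.continuous.comp hc), integral_circle f.continuous]
  congr 1
  obtain ⟨t, rfl⟩ := Circle.exp_surjective u
  simp_rw [← Circle.exp_add]
  have hp : Function.Periodic (fun θ => f (Circle.exp θ)) (2 * Real.pi) := by
    intro θ
    simp only [Circle.periodic_exp θ]
  rw [intervalIntegral.integral_comp_add_left (fun θ => f (Circle.exp θ)) t]
  have := hp.intervalIntegral_add_eq t 0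
  simpa using this

lemma mp_torus {d : ℕ} (u : Fin d → Circle) :
    MeasurePreserving (fun (z : Fin d → Circle) j => u j * z j) (torusHaar d) (torusHaar d) :=
  measurePreserving_pi _ _ fun j => mp_mul (u j)

lemma integrable_cont {X : Type*} [TopologicalSpace X] [CompactSpace X] [MeasurableSpace X]
    [OpensMeasurableSpace X] {μ : Measure X} [IsFiniteMeasure μ] {E : Type*} [NormedAddCommGroup E]
    {f : X → E} (hf : Continuous f) : Integrable f μ :=
  hf.integrable_of_hasCompactSupport (HasCompactSupport.of_compactSpace f)

/-- averaging over the rotation of the coordinates in `A` -/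
lemma integral_rot {d : ℕ} (A : Finset (Fin d)) {F : (Fin d → Circle) → ℝ} (hF : Continuous F) :
    ∫ z, F z ∂(torusHaar d) =
      ∫ z, (∫ u, F (fun j => (if j ∈ A then u else 1) * z j) ∂circleHaar) ∂(torusHaar d) := by
  have hc : Continuous (Function.uncurry fun (z : Fin d → Circle) (u : Circle) =>
      F (fun j => (if j ∈ A then u else 1) * z j)) := by
    apply hF.comp
    refine continuous_pi fun j => ?_
    by_cases h : j ∈ A <;> simp only [h, if_true, if_false] <;> fun_prop
  rw [integral_integral_swap (integrable_cont hc)]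
  have : ∀ u : Circle, ∫ z, F (fun j => (if j ∈ A then u else 1) * z j) ∂(torusHaar d)
      = ∫ z, F z ∂(torusHaar d) := by
    intro u
    have h := mp_torus (d := d) (fun j => if j ∈ A then u else 1)
    conv_rhs => rw [← h.map_eq]
    rw [integral_map h.measurable.aemeasurable hF.aestronglyMeasurable]
  simp_rw [this]
  simp

end KS

namespace KS
open MeasureTheory Set Filter Topology

lemma nonneg_of_deriv {f f' : ℝ → ℝ} (h0 : f 0 = 0) (hd : ∀ x, HasDerivAt f (f' x) x)
    (hp : ∀ x, 0 ≤ x → 0 ≤ f' x) {x : ℝ} (hx : 0 ≤ x) : 0 ≤ f x := by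
  have hm : MonotoneOn f (Set.Ici 0) := by
    apply monotoneOn_of_deriv_nonneg (convex_Ici 0)
    · exact fun y _ => (hd y).continuousAt.continuousWithinAt
    · exact fun y _ => (hd y).differentiableAt.differentiableWithinAt
    · intro y hy
      rw [(hd y).deriv]
      rw [interior_Ici] at hy
      exact hp y (le_of_lt hy)
  have := hm (Set.mem_Ici.2 le_rfl) (Set.mem_Ici.2 hx) hx
  rwa [h0] at this

lemma sin_b1 {x : ℝ} (hx : 0 ≤ x) : 0 ≤ x - Real.sin x := by
  refine nonneg_of_deriv (f := fun x => x - Real.sin x) (f' := fun x => 1 - Real.cos x) (by simp)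
    (fun y => ?_) (fun y _ => by linarith [Real.cos_le_one y]) hx
  exact (hasDerivAt_id y).sub (Real.hasDerivAt_sin y)

lemma cos_b2 {x : ℝ} (hx : 0 ≤ x) : 0 ≤ Real.cos x - (1 - x^2/2) := by
  refine nonneg_of_deriv (f := fun x => Real.cos x - (1 - x^2/2)) (f' := fun x => x - Real.sin x)
    (by simp) (fun y => ?_) (fun y hy => sin_b1 hy) hx
  refine HasDerivAt.congr_deriv ((Real.hasDerivAt_cos y).sub (((hasDerivAt_pow 2 y).div_const 2).const_sub 1)) ?_
  norm_num; try ring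

lemma sin_b3 {x : ℝ} (hx : 0 ≤ x) : 0 ≤ Real.sin x - (x - x^3/6) := by
  refine nonneg_of_deriv (f := fun x => Real.sin x - (x - x^3/6))
    (f' := fun x => Real.cos x - (1 - x^2/2))
    (by simp) (fun y => ?_) (fun y hy => cos_b2 hy) hx
  refine HasDerivAt.congr_deriv ((Real.hasDerivAt_sin y).sub ((hasDerivAt_id y).sub ((hasDerivAt_pow 3 y).div_const 6))) ?_
  norm_num; try ring

lemma cos_b4 {x : ℝ} (hx : 0 ≤ x) : 0 ≤ (1 - x^2/2 + x^4/24) - Real.cos x := by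
  refine nonneg_of_deriv (f := fun x => (1 - x^2/2 + x^4/24) - Real.cos x)
    (f' := fun x => Real.sin x - (x - x^3/6))
    (by simp) (fun y => ?_) (fun y hy => sin_b3 hy) hx
  refine HasDerivAt.congr_deriv (((((hasDerivAt_pow 2 y).div_const 2).const_sub 1).add
    ((hasDerivAt_pow 4 y).div_const 24)).sub (Real.hasDerivAt_cos y)) ?_
  norm_num; try ring

lemma sin_b5 {x : ℝ} (hx : 0 ≤ x) : 0 ≤ (x - x^3/6 + x^5/120) - Real.sin x := by
  refine nonneg_of_deriv (f := fun x => (x - x^3/6 + x^5/120) - Real.sin x)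
    (f' := fun x => (1 - x^2/2 + x^4/24) - Real.cos x)
    (by simp) (fun y => ?_) (fun y hy => cos_b4 hy) hx
  refine HasDerivAt.congr_deriv ((((hasDerivAt_id y).sub ((hasDerivAt_pow 3 y).div_const 6)).add
    ((hasDerivAt_pow 5 y).div_const 120)).sub (Real.hasDerivAt_sin y)) ?_
  norm_num; try ring

lemma cos_b6 {x : ℝ} (hx : 0 ≤ x) : 0 ≤ Real.cos x - (1 - x^2/2 + x^4/24 - x^6/720) := by
  refine nonneg_of_deriv (f := fun x => Real.cos x - (1 - x^2/2 + x^4/24 - x^6/720))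
    (f' := fun x => (x - x^3/6 + x^5/120) - Real.sin x)
    (by simp) (fun y => ?_) (fun y hy => sin_b5 hy) hx
  refine HasDerivAt.congr_deriv ((Real.hasDerivAt_cos y).sub (((((hasDerivAt_pow 2 y).div_const 2).const_sub 1).add
    ((hasDerivAt_pow 4 y).div_const 24)).sub ((hasDerivAt_pow 6 y).div_const 720))) ?_
  norm_num; try ring

lemma sin_b7 {x : ℝ} (hx : 0 ≤ x) : 0 ≤ Real.sin x - (x - x^3/6 + x^5/120 - x^7/5040) := by
  refine nonneg_of_deriv (f := fun x => Real.sin x - (x - x^3/6 + x^5/120 - x^7/5040))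
    (f' := fun x => Real.cos x - (1 - x^2/2 + x^4/24 - x^6/720))
    (by simp) (fun y => ?_) (fun y hy => cos_b6 hy) hx
  refine HasDerivAt.congr_deriv ((Real.hasDerivAt_sin y).sub ((((hasDerivAt_id y).sub ((hasDerivAt_pow 3 y).div_const 6)).add
    ((hasDerivAt_pow 5 y).div_const 120)).sub ((hasDerivAt_pow 7 y).div_const 5040))) ?_
  norm_num; try ring

lemma cos_b8 {x : ℝ} (hx : 0 ≤ x) :
    0 ≤ (1 - x^2/2 + x^4/24 - x^6/720 + x^8/40320) - Real.cos x := by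
  refine nonneg_of_deriv (f := fun x => (1 - x^2/2 + x^4/24 - x^6/720 + x^8/40320) - Real.cos x)
    (f' := fun x => Real.sin x - (x - x^3/6 + x^5/120 - x^7/5040))
    (by simp) (fun y => ?_) (fun y hy => sin_b7 hy) hx
  refine HasDerivAt.congr_deriv (((((((hasDerivAt_pow 2 y).div_const 2).const_sub 1).add
    ((hasDerivAt_pow 4 y).div_const 24)).sub ((hasDerivAt_pow 6 y).div_const 720)).add
    ((hasDerivAt_pow 8 y).div_const 40320)).sub (Real.hasDerivAt_cos y)) ?_
  norm_num; try ring

lemma sin_b9 {x : ℝ} (hx : 0 ≤ x) :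
    0 ≤ (x - x^3/6 + x^5/120 - x^7/5040 + x^9/362880) - Real.sin x := by
  refine nonneg_of_deriv (f := fun x => (x - x^3/6 + x^5/120 - x^7/5040 + x^9/362880) - Real.sin x)
    (f' := fun x => (1 - x^2/2 + x^4/24 - x^6/720 + x^8/40320) - Real.cos x)
    (by simp) (fun y => ?_) (fun y hy => cos_b8 hy) hx
  refine HasDerivAt.congr_deriv ((((((hasDerivAt_id y).sub ((hasDerivAt_pow 3 y).div_const 6)).add
    ((hasDerivAt_pow 5 y).div_const 120)).sub ((hasDerivAt_pow 7 y).div_const 5040)).add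
    ((hasDerivAt_pow 9 y).div_const 362880)).sub (Real.hasDerivAt_sin y)) ?_
  norm_num; try ring

lemma cos_b10 {x : ℝ} (hx : 0 ≤ x) :
    0 ≤ Real.cos x - (1 - x^2/2 + x^4/24 - x^6/720 + x^8/40320 - x^10/3628800) := by
  refine nonneg_of_deriv
    (f := fun x => Real.cos x - (1 - x^2/2 + x^4/24 - x^6/720 + x^8/40320 - x^10/3628800))
    (f' := fun x => (x - x^3/6 + x^5/120 - x^7/5040 + x^9/362880) - Real.sin x)
    (by simp) (fun y => ?_) (fun y hy => sin_b9 hy) hx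
  refine HasDerivAt.congr_deriv ((Real.hasDerivAt_cos y).sub ((((((((hasDerivAt_pow 2 y).div_const 2).const_sub 1).add
    ((hasDerivAt_pow 4 y).div_const 24)).sub ((hasDerivAt_pow 6 y).div_const 720)).add
    ((hasDerivAt_pow 8 y).div_const 40320))).sub ((hasDerivAt_pow 10 y).div_const 3628800))) ?_
  norm_num; try ring

/-- even functions: extend to all reals -/
lemma cos_c4 (x : ℝ) : Real.cos x ≤ 1 - x^2/2 + x^4/24 := by
  have := cos_b4 (abs_nonneg x)
  rw [Real.cos_abs, Even.pow_abs (by decide), Even.pow_abs (by decide)] at this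
  linarith

lemma cos_c2 (x : ℝ) : 1 - x^2/2 ≤ Real.cos x := by
  have := cos_b2 (abs_nonneg x)
  rw [Real.cos_abs, Even.pow_abs (by decide)] at this
  linarith

lemma cos_c6 (x : ℝ) : 1 - x^2/2 + x^4/24 - x^6/720 ≤ Real.cos x := by
  have := cos_b6 (abs_nonneg x)
  rw [Real.cos_abs, Even.pow_abs (by decide), Even.pow_abs (by decide),
    Even.pow_abs (by decide)] at this
  linarith

lemma cos_c10 (x : ℝ) :
    1 - x^2/2 + x^4/24 - x^6/720 + x^8/40320 - x^10/3628800 ≤ Real.cos x := by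
  have := cos_b10 (abs_nonneg x)
  rw [Real.cos_abs, Even.pow_abs (by decide), Even.pow_abs (by decide), Even.pow_abs (by decide),
    Even.pow_abs (by decide), Even.pow_abs (by decide)] at this
  linarith

/-- `y sin y` bounds -/
lemma ysin_c10 {y : ℝ} : y * Real.sin y ≤ y^2 - y^4/6 + y^6/120 - y^8/5040 + y^10/362880 := by
  wlog h : 0 ≤ y generalizing y
  · have := this (y := -y) (by linarith)
    rw [Real.sin_neg] at this
    simp only [even_two, Even.neg_pow, (by decide : Even 4), (by decide : Even 6),
      (by decide : Even 8), (by decide : Even 10)] at this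
    linarith
  have := mul_nonneg h (sin_b9 h)
  linarith

lemma ysin_c8 {y : ℝ} : y^2 - y^4/6 + y^6/120 - y^8/5040 ≤ y * Real.sin y := by
  wlog h : 0 ≤ y generalizing y
  · have := this (y := -y) (by linarith)
    rw [Real.sin_neg] at this
    simp only [even_two, Even.neg_pow, (by decide : Even 4), (by decide : Even 6),
      (by decide : Even 8)] at this
    linarith
  have := mul_nonneg h (sin_b7 h)
  linarith

lemma exp_b1 {x : ℝ} : 0 ≤ Real.exp (-x) - (1 - x) := by
  linarith [Real.add_one_le_exp (-x)]

lemma exp_deriv (y : ℝ) : HasDerivAt (fun x => Real.exp (-x)) (- Real.exp (-y)) y := by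
  simpa using (hasDerivAt_neg y).exp

lemma exp_b2 {x : ℝ} (hx : 0 ≤ x) : 0 ≤ (1 - x + x^2/2) - Real.exp (-x) := by
  refine nonneg_of_deriv (f := fun x => (1 - x + x^2/2) - Real.exp (-x))
    (f' := fun x => Real.exp (-x) - (1 - x)) (by simp) (fun y => ?_) (fun y _ => exp_b1) hx
  refine HasDerivAt.congr_deriv ((((hasDerivAt_id y).const_sub 1).add ((hasDerivAt_pow 2 y).div_const 2)).sub
    (exp_deriv y)) ?_
  norm_num; try ring

lemma exp_b3 {x : ℝ} (hx : 0 ≤ x) : 0 ≤ Real.exp (-x) - (1 - x + x^2/2 - x^3/6) := by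
  refine nonneg_of_deriv (f := fun x => Real.exp (-x) - (1 - x + x^2/2 - x^3/6))
    (f' := fun x => (1 - x + x^2/2) - Real.exp (-x)) (by simp) (fun y => ?_)
    (fun y hy => exp_b2 hy) hx
  refine HasDerivAt.congr_deriv ((exp_deriv y).sub ((((hasDerivAt_id y).const_sub 1).add
    ((hasDerivAt_pow 2 y).div_const 2)).sub ((hasDerivAt_pow 3 y).div_const 6))) ?_
  norm_num; try ring

lemma exp_b4 {x : ℝ} (hx : 0 ≤ x) : 0 ≤ (1 - x + x^2/2 - x^3/6 + x^4/24) - Real.exp (-x) := by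
  refine nonneg_of_deriv (f := fun x => (1 - x + x^2/2 - x^3/6 + x^4/24) - Real.exp (-x))
    (f' := fun x => Real.exp (-x) - (1 - x + x^2/2 - x^3/6)) (by simp) (fun y => ?_)
    (fun y hy => exp_b3 hy) hx
  refine HasDerivAt.congr_deriv (((((hasDerivAt_id y).const_sub 1).add ((hasDerivAt_pow 2 y).div_const 2)).sub
    ((hasDerivAt_pow 3 y).div_const 6)).add ((hasDerivAt_pow 4 y).div_const 24) |>.sub
    (exp_deriv y)) ?_
  norm_num; try ring

end KS

namespace KS
open MeasureTheory Set Filter Topology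

/-- The Bessel function `J₀`. -/
noncomputable def J (x : ℝ) : ℝ := ∫ z : Circle, Real.cos (x * (z : ℂ).re) ∂circleHaar

lemma exp_re (θ : ℝ) : ((Circle.exp θ : Circle) : ℂ).re = Real.cos θ := by
  rw [Circle.coe_exp, Complex.exp_ofReal_mul_I_re]

lemma J_eq (x : ℝ) :
    J x = (2 * Real.pi)⁻¹ * ∫ θ in (0:ℝ)..(2 * Real.pi), Real.cos (x * Real.cos θ) := by
  rw [J, integral_circle (by fun_prop)]
  simp_rw [exp_re]
  rfl

/-- moments -/
noncomputable def mo (n : ℕ) : ℝ :=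
  (2 * Real.pi)⁻¹ * ∫ θ in (0:ℝ)..(2 * Real.pi), Real.cos θ ^ n

lemma mo_zero : mo 0 = 1 := by
  have := Real.pi_pos
  simp [mo]
  field_simp

lemma mo_step (n : ℕ) : mo (n + 2) = (n + 1) / (n + 2) * mo n := by
  rw [mo, mo, integral_cos_pow]
  simp
  ring

lemma mo2 : mo 2 = 1/2 := by rw [mo_step 0, mo_zero]; norm_num
lemma mo4 : mo 4 = 3/8 := by rw [mo_step 2, mo2]; norm_num
lemma mo6 : mo 6 = 5/16 := by rw [mo_step 4, mo4]; norm_num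
lemma mo8 : mo 8 = 35/128 := by rw [mo_step 6, mo6]; norm_num
lemma mo10 : mo 10 = 63/256 := by rw [mo_step 8, mo8]; norm_num

lemma avg_poly (a0 a1 a2 a3 a4 a5 : ℝ) :
    (2 * Real.pi)⁻¹ * ∫ θ in (0:ℝ)..(2 * Real.pi),
      (a0 + a1 * Real.cos θ ^ 2 + a2 * Real.cos θ ^ 4 + a3 * Real.cos θ ^ 6 + a4 * Real.cos θ ^ 8
        + a5 * Real.cos θ ^ 10) =
    a0 + a1 * (1/2) + a2 * (3/8) + a3 * (5/16) + a4 * (35/128) + a5 * (63/256) := by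
  have hi : ∀ (c : ℝ) (n : ℕ), IntervalIntegrable (fun θ => c * Real.cos θ ^ n) volume 0
      (2 * Real.pi) := fun c n => Continuous.intervalIntegrable (by fun_prop) _ _
  have h0 : IntervalIntegrable (fun _ : ℝ => a0) volume 0 (2 * Real.pi) := by simp
  rw [intervalIntegral.integral_add ((((h0.add (hi _ _)).add (hi _ _)).add (hi _ _)).add (hi _ _))
      (hi _ _), intervalIntegral.integral_add (((h0.add (hi _ _)).add (hi _ _)).add (hi _ _))
      (hi _ _), intervalIntegral.integral_add ((h0.add (hi _ _)).add (hi _ _))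
      (hi _ _), intervalIntegral.integral_add (h0.add (hi _ _)) (hi _ _),
      intervalIntegral.integral_add h0 (hi _ _)]
  simp only [intervalIntegral.integral_const_mul, intervalIntegral.integral_const, sub_zero,
    smul_eq_mul]
  have hp : (2 * Real.pi)⁻¹ * (2 * Real.pi) = 1 := inv_mul_cancel₀ (by positivity)
  rw [← mo2, ← mo4, ← mo6, ← mo8, ← mo10]
  simp only [mo]
  linear_combination a0 * hp

lemma avg_mono {f g : ℝ → ℝ} (hf : Continuous f) (hg : Continuous g) (h : ∀ x, f x ≤ g x) :
    (2 * Real.pi)⁻¹ * ∫ θ in (0:ℝ)..(2 * Real.pi), f θ ≤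
    (2 * Real.pi)⁻¹ * ∫ θ in (0:ℝ)..(2 * Real.pi), g θ := by
  apply mul_le_mul_of_nonneg_left _ (by positivity)
  exact intervalIntegral.integral_mono_on (by positivity) (hf.intervalIntegrable _ _)
    (hg.intervalIntegrable _ _) (fun x _ => h x)

lemma J_lower2 (x : ℝ) : 1 - x^2/4 ≤ J x := by
  have h := avg_poly 1 (-x^2/2) 0 0 0 0
  have h2 := avg_mono (f := fun θ => (1 + (-x^2/2) * Real.cos θ ^ 2 + 0 * Real.cos θ ^ 4 +
      0 * Real.cos θ ^ 6 + 0 * Real.cos θ ^ 8 + 0 * Real.cos θ ^ 10))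
      (g := fun θ => Real.cos (x * Real.cos θ)) (by fun_prop) (by fun_prop)
      (fun θ => by have := cos_c2 (x * Real.cos θ); ring_nf at this ⊢; linarith)
  rw [h, ← J_eq] at h2
  linarith

lemma J_upper4 (x : ℝ) : J x ≤ 1 - x^2/4 + x^4/64 := by
  have h := avg_poly 1 (-x^2/2) (x^4/24) 0 0 0
  have h2 := avg_mono (g := fun θ => (1 + (-x^2/2) * Real.cos θ ^ 2 + (x^4/24) * Real.cos θ ^ 4 +
      0 * Real.cos θ ^ 6 + 0 * Real.cos θ ^ 8 + 0 * Real.cos θ ^ 10))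
      (f := fun θ => Real.cos (x * Real.cos θ)) (by fun_prop) (by fun_prop)
      (fun θ => by have := cos_c4 (x * Real.cos θ); ring_nf at this ⊢; linarith)
  rw [h, ← J_eq] at h2
  linarith

lemma J_lower6 (x : ℝ) : 1 - x^2/4 + x^4/64 - x^6/2304 ≤ J x := by
  have h := avg_poly 1 (-x^2/2) (x^4/24) (-x^6/720) 0 0
  have h2 := avg_mono (f := fun θ => (1 + (-x^2/2) * Real.cos θ ^ 2 + (x^4/24) * Real.cos θ ^ 4 +
      (-x^6/720) * Real.cos θ ^ 6 + 0 * Real.cos θ ^ 8 + 0 * Real.cos θ ^ 10))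
      (g := fun θ => Real.cos (x * Real.cos θ)) (by fun_prop) (by fun_prop)
      (fun θ => by have := cos_c6 (x * Real.cos θ); ring_nf at this ⊢; linarith)
  rw [h, ← J_eq] at h2
  linarith

lemma J_lower10 (x : ℝ) :
    1 - x^2/4 + x^4/64 - x^6/2304 + x^8/147456 - x^10/14745600 ≤ J x := by
  have h := avg_poly 1 (-x^2/2) (x^4/24) (-x^6/720) (x^8/40320) (-x^10/3628800)
  have h2 := avg_mono (f := fun θ => (1 + (-x^2/2) * Real.cos θ ^ 2 + (x^4/24) * Real.cos θ ^ 4 +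
      (-x^6/720) * Real.cos θ ^ 6 + (x^8/40320) * Real.cos θ ^ 8
      + (-x^10/3628800) * Real.cos θ ^ 10))
      (g := fun θ => Real.cos (x * Real.cos θ)) (by fun_prop) (by fun_prop)
      (fun θ => by have := cos_c10 (x * Real.cos θ); ring_nf at this ⊢; linarith)
  rw [h, ← J_eq] at h2
  linarith

/-- minus the derivative of `J` (i.e. `J₁`). -/
noncomputable def J1 (x : ℝ) : ℝ :=
  (2 * Real.pi)⁻¹ * ∫ θ in (0:ℝ)..(2 * Real.pi), Real.cos θ * Real.sin (x * Real.cos θ)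

noncomputable def J2 (x : ℝ) : ℝ :=
  (2 * Real.pi)⁻¹ * ∫ θ in (0:ℝ)..(2 * Real.pi), Real.cos θ ^ 2 * Real.cos (x * Real.cos θ)

lemma J1_upper (x : ℝ) :
    x * J1 x ≤ x^2/2 - x^4/16 + x^6/384 - x^8/18432 + x^10/1474560 := by
  have h := avg_poly 0 (x^2) (-x^4/6) (x^6/120) (-x^8/5040) (x^10/362880)
  have h2 := avg_mono (g := fun θ => (0 + (x^2) * Real.cos θ ^ 2 + (-x^4/6) * Real.cos θ ^ 4 +
      (x^6/120) * Real.cos θ ^ 6 + (-x^8/5040) * Real.cos θ ^ 8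
      + (x^10/362880) * Real.cos θ ^ 10))
      (f := fun θ => x * (Real.cos θ * Real.sin (x * Real.cos θ))) (by fun_prop) (by fun_prop)
      (fun θ => by have := ysin_c10 (y := x * Real.cos θ); ring_nf at this ⊢; linarith)
  rw [h, intervalIntegral.integral_const_mul] at h2
  rw [J1]
  linarith

lemma J1_lower (x : ℝ) :
    x^2/2 - x^4/16 + x^6/384 - x^8/18432 ≤ x * J1 x := by
  have h := avg_poly 0 (x^2) (-x^4/6) (x^6/120) (-x^8/5040) 0
  have h2 := avg_mono (f := fun θ => (0 + (x^2) * Real.cos θ ^ 2 + (-x^4/6) * Real.cos θ ^ 4 +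
      (x^6/120) * Real.cos θ ^ 6 + (-x^8/5040) * Real.cos θ ^ 8 + 0 * Real.cos θ ^ 10))
      (g := fun θ => x * (Real.cos θ * Real.sin (x * Real.cos θ))) (by fun_prop) (by fun_prop)
      (fun θ => by have := ysin_c8 (y := x * Real.cos θ); ring_nf at this ⊢; linarith)
  rw [h, intervalIntegral.integral_const_mul] at h2
  rw [J1]
  linarith

lemma hasDerivAt_J (x : ℝ) : HasDerivAt J (- J1 x) x := by
  have hJ : J = fun x => (2 * Real.pi)⁻¹ * ∫ θ in (0:ℝ)..(2 * Real.pi),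
      Real.cos (x * Real.cos θ) := funext J_eq
  have h := (intervalIntegral.hasDerivAt_integral_of_dominated_loc_of_deriv_le (μ := volume)
    (a := 0) (b := 2 * Real.pi) (bound := fun _ => (1:ℝ))
    (F := fun x θ => Real.cos (x * Real.cos θ))
    (F' := fun x θ => - (Real.cos θ * Real.sin (x * Real.cos θ))) (x₀ := x) (s := univ) univ_mem
    (Eventually.of_forall fun y => Continuous.aestronglyMeasurable (by fun_prop))
    (Continuous.intervalIntegrable (by fun_prop) _ _)
    (Continuous.aestronglyMeasurable (by fun_prop)) ?_ (by simp) ?_).2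
  · rw [hJ]
    refine (h.const_mul _).congr_deriv ?_
    rw [J1, intervalIntegral.integral_neg]; ring
  · refine Eventually.of_forall fun θ _ y _ => ?_
    rw [norm_neg, norm_mul]
    exact mul_le_one₀ (Real.abs_cos_le_one _) (norm_nonneg _) (Real.abs_sin_le_one _)
  · refine Eventually.of_forall fun θ _ y _ => ?_
    refine ((hasDerivAt_id y).mul_const (Real.cos θ)).cos.congr_deriv ?_
    simp; ring

lemma hasDerivAt_J1 (x : ℝ) : HasDerivAt J1 (J2 x) x := by
  have h := (intervalIntegral.hasDerivAt_integral_of_dominated_loc_of_deriv_le (μ := volume)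
    (a := 0) (b := 2 * Real.pi) (bound := fun _ => (1:ℝ))
    (F := fun x θ => Real.cos θ * Real.sin (x * Real.cos θ))
    (F' := fun x θ => Real.cos θ ^ 2 * Real.cos (x * Real.cos θ)) (x₀ := x) (s := univ) univ_mem
    (Eventually.of_forall fun y => Continuous.aestronglyMeasurable (by fun_prop))
    (Continuous.intervalIntegrable (by fun_prop) _ _)
    (Continuous.aestronglyMeasurable (by fun_prop)) ?_ (by simp) ?_).2
  · exact h.const_mul _
  · refine Eventually.of_forall fun θ _ y _ => ?_
    rw [norm_mul, norm_pow]
    exact mul_le_one₀ (pow_le_one₀ (norm_nonneg _) (Real.abs_cos_le_one _)) (norm_nonneg _)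
      (Real.abs_cos_le_one _)
  · refine Eventually.of_forall fun θ _ y _ => ?_
    refine (((hasDerivAt_id y).mul_const (Real.cos θ)).sin.const_mul _).congr_deriv ?_
    simp; ring

lemma bessel_ode (x : ℝ) : J1 x = x * (J x - J2 x) := by
  have hd : ∀ θ : ℝ, HasDerivAt (fun θ => Real.sin θ * Real.sin (x * Real.cos θ))
      (Real.cos θ * Real.sin (x * Real.cos θ) - x * (Real.cos (x * Real.cos θ)
        - Real.cos θ ^ 2 * Real.cos (x * Real.cos θ))) θ := by
    intro θ
    refine ((Real.hasDerivAt_sin θ).mul ((Real.hasDerivAt_cos θ).const_mul x).sin).congr_deriv ?_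
    have := Real.sin_sq_add_cos_sq θ
    linear_combination (-x * Real.cos (x * Real.cos θ)) * this
  have h := intervalIntegral.integral_eq_sub_of_hasDerivAt (a := 0) (b := 2 * Real.pi)
    (fun θ _ => hd θ) (Continuous.intervalIntegrable (by fun_prop) _ _)
  rw [intervalIntegral.integral_sub (Continuous.intervalIntegrable (by fun_prop) _ _)
    (Continuous.intervalIntegrable (by fun_prop) _ _), intervalIntegral.integral_const_mul,
    intervalIntegral.integral_sub (Continuous.intervalIntegrable (by fun_prop) _ _)
    (Continuous.intervalIntegrable (by fun_prop) _ _)] at h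
  simp only [Real.sin_two_pi, Real.sin_zero, zero_mul, sub_zero] at h
  rw [J1, J2, J_eq]
  linear_combination (2 * Real.pi)⁻¹ * h

lemma energy_anti : AntitoneOn (fun x => J x ^ 2 + J1 x ^ 2) (Ici 0) := by
  have hd : ∀ x, HasDerivAt (fun x => J x ^ 2 + J1 x ^ 2)
      (2 * J x * (- J1 x) + 2 * J1 x * J2 x) x := by
    intro x
    refine (((hasDerivAt_J x).pow 2).add ((hasDerivAt_J1 x).pow 2)).congr_deriv ?_
    norm_num
  apply antitoneOn_of_deriv_nonpos (convex_Ici 0)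
  · exact fun y _ => (hd y).continuousAt.continuousWithinAt
  · exact fun y _ => (hd y).differentiableAt.differentiableWithinAt
  · intro y hy
    rw [interior_Ici] at hy
    rw [(hd y).deriv, bessel_ode y]
    have : 0 ≤ y * (J y - J2 y)^2 := mul_nonneg (le_of_lt hy) (sq_nonneg _)
    linarith

lemma J_continuous : Continuous J :=
  continuous_iff_continuousAt.2 fun x => (hasDerivAt_J x).continuousAt

lemma J_abs_le_one (x : ℝ) : |J x| ≤ 1 := by
  rw [J]
  have h := norm_integral_le_of_norm_le_const (μ := circleHaar) (C := 1)
    (f := fun z : Circle => Real.cos (x * (z : ℂ).re))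
    (Eventually.of_forall fun z => Real.abs_cos_le_one _)
  simpa using h

lemma J_zero : J 0 = 1 := by simp [J]

lemma J_neg_two : |J (16/5)| ≤ 0.3208 := by
  rw [abs_le]
  constructor
  · have := J_lower10 (16/5); norm_num at this ⊢; linarith
  · have := J_upper4 (16/5); norm_num at this ⊢; linarith

lemma J1_abs : |J1 (16/5)| ≤ 0.2635 := by
  rw [abs_le]
  constructor
  · have := J1_lower (16/5); norm_num at this ⊢; linarith
  · have := J1_upper (16/5); norm_num at this ⊢; linarith

lemma J_tail {x : ℝ} (hx : 2.3 ≤ x) : |J x| ≤ 0.426 := by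
  rcases le_total x (16/5) with h | h
  · have h1 : 5.29 ≤ x^2 := by nlinarith
    have h2 : x^2 ≤ 10.24 := by nlinarith
    have hu := J_upper4 x
    have hl := J_lower6 x
    have e4 : x^4 = (x^2)^2 := by ring
    have e6 : x^6 = (x^2)^3 := by ring
    rw [e4] at hu hl; rw [e6] at hl
    generalize x^2 = w at *
    rw [abs_le]
    constructor
    · have : w^3 ≤ 10.24 * w^2 := by nlinarith [sq_nonneg w]
      nlinarith
    · nlinarith
  · have := energy_anti (show (16/5:ℝ) ∈ Ici 0 by norm_num [mem_Ici])
      (show x ∈ Ici 0 by simp only [mem_Ici]; linarith) h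
    simp only at this
    have h1 := sq_le_sq' (by linarith [abs_nonneg (J (16/5))]) J_neg_two
    have h2 := sq_le_sq' (by linarith [abs_nonneg (J1 (16/5))]) J1_abs
    rw [sq_abs] at h1 h2
    apply abs_le_of_sq_le_sq _ (by norm_num)
    norm_num at h1 h2 ⊢
    nlinarith [sq_nonneg (J1 x)]

end KS

namespace KS
open MeasureTheory Set Filter Topology

lemma integrable_div_sq {f : ℝ → ℝ} (hf : Continuous f) {C : ℝ}
    (h1 : ∀ x, |f x| ≤ C * x^2) (h2 : ∀ x, |f x| ≤ C) :
    IntegrableOn (fun x => f x / x^2) (Ioi 0) := by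
  have hg : IntegrableOn (fun x : ℝ => (2 * C) * (1 + x^2)⁻¹) (Ioi 0) :=
    (integrable_inv_one_add_sq.const_mul _).integrableOn
  refine Integrable.mono' hg ?_ ?_
  · exact (hf.measurable.div (measurable_id.pow_const 2)).aestronglyMeasurable
  · refine (ae_restrict_mem measurableSet_Ioi).mono fun x hx => ?_
    have hx : 0 < x := hx
    rw [Real.norm_eq_abs, abs_div, abs_of_pos (by positivity : 0 < x^2), div_le_iff₀ (by positivity),
      ← div_eq_mul_inv, div_mul_eq_mul_div, le_div_iff₀ (by positivity)]
    nlinarith [h1 x, h2 x, mul_le_mul_of_nonneg_right (h2 x) (sq_nonneg x)]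

lemma integrable_gauss {a : ℝ} (ha : 0 < a) :
    IntegrableOn (fun x => (1 - Real.exp (-a * x^2)) / x^2) (Ioi 0) := by
  refine integrable_div_sq (C := a + 1) (f := fun x => 1 - Real.exp (-a * x^2)) (by fun_prop) ?_ ?_
  all_goals
    intro x
    have h1 : Real.exp (-a * x^2) ≤ 1 := Real.exp_le_one_iff.2 (by nlinarith [sq_nonneg x])
    have h2 := Real.add_one_le_exp (-a * x^2)
    have h3 := Real.exp_pos (-a * x^2)
    rw [abs_of_nonneg (by linarith)]
    nlinarith [sq_nonneg x]

lemma integral_gauss {a : ℝ} (ha : 0 < a) :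
    ∫ x in Ioi (0:ℝ), (1 - Real.exp (-a * x^2)) / x^2 = Real.sqrt (Real.pi * a) := by
  have hG : IntegrableOn (fun x : ℝ => 2 * a * Real.exp (-a * x^2)) (Ioi 0) :=
    ((integrable_exp_neg_mul_sq ha).const_mul _).integrableOn
  have hb : ∀ x : ℝ, 0 ≤ 1 - Real.exp (-a * x^2) ∧ 1 - Real.exp (-a * x^2) ≤ a * x^2 ∧
      1 - Real.exp (-a * x^2) ≤ 1 := by
    intro x
    have h1 : Real.exp (-a * x^2) ≤ 1 := Real.exp_le_one_iff.2 (by nlinarith [sq_nonneg x])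
    have h2 := Real.add_one_le_exp (-a * x^2)
    have h3 := Real.exp_pos (-a * x^2)
    refine ⟨by linarith, by linarith, by linarith⟩
  have key := integral_Ioi_of_hasDerivAt_of_tendsto (a := 0) (m := 0)
    (f := fun x : ℝ => -((1 - Real.exp (-a * x^2)) / x))
    (f' := fun x => (1 - Real.exp (-a * x^2)) / x^2 - 2 * a * Real.exp (-a * x^2)) ?_ ?_
    ((integrable_gauss ha).sub hG) ?_
  · rw [integral_sub (integrable_gauss ha) hG, integral_const_mul, integral_gaussian_Ioi] at key
    simp only [div_zero, neg_zero, sub_zero] at key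
    have : Real.sqrt (Real.pi * a) = a * Real.sqrt (Real.pi / a) := by
      rw [show Real.pi * a = a^2 * (Real.pi / a) by field_simp, Real.sqrt_mul (by positivity),
        Real.sqrt_sq ha.le]
    linarith
  · apply ContinuousAt.continuousWithinAt
    rw [ContinuousAt]
    simp only [div_zero, neg_zero]
    apply squeeze_zero_norm (a := fun x => a * |x|)
    · intro x
      rw [norm_neg, norm_div, Real.norm_eq_abs, Real.norm_eq_abs, abs_of_nonneg (hb x).1]
      rcases eq_or_ne x 0 with rfl | hx
      · simp
      · rw [div_le_iff₀ (abs_pos.2 hx), mul_assoc, abs_mul_abs_self]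
        nlinarith [(hb x).2.1]
    · have : Continuous (fun x : ℝ => a * |x|) := by fun_prop
      simpa using this.tendsto 0
  · intro x hx
    have hx : 0 < x := hx
    have h1 : HasDerivAt (fun x : ℝ => 1 - Real.exp (-a * x^2))
        (2 * a * x * Real.exp (-a * x^2)) x := by
      refine ((((hasDerivAt_pow 2 x).const_mul (-a)).exp).const_sub 1).congr_deriv ?_
      norm_num; ring
    refine ((h1.div (hasDerivAt_id x) hx.ne').neg).congr_deriv ?_
    simp only [id]
    field_simp
    ring
  · apply squeeze_zero_norm' (a := fun x => x⁻¹)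
    · filter_upwards [eventually_gt_atTop 0] with x hx
      rw [norm_neg, norm_div, Real.norm_eq_abs, Real.norm_eq_abs, abs_of_nonneg (hb x).1,
        abs_of_pos hx, div_le_iff₀ hx, inv_mul_cancel₀ hx.ne']
      exact (hb x).2.2
    · exact tendsto_inv_atTop_zero

lemma one_sub_cos_le (y : ℝ) : |1 - Real.cos y| ≤ y^2 / 2 := by
  rw [abs_of_nonneg (by linarith [Real.cos_le_one y])]
  linarith [cos_c2 y]

lemma one_sub_cos_le2 (y : ℝ) : |1 - Real.cos y| ≤ 2 := by
  rw [abs_of_nonneg (by linarith [Real.cos_le_one y])]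
  linarith [Real.neg_one_le_cos y]

lemma integrable_cos (y : ℝ) :
    IntegrableOn (fun t => (1 - Real.cos (t * y)) / t^2) (Ioi 0) := by
  refine integrable_div_sq (C := y^2 + 2) (f := fun t => 1 - Real.cos (t * y)) (by fun_prop) ?_ ?_
  · intro t
    have := one_sub_cos_le (t * y)
    nlinarith [sq_nonneg t, sq_nonneg (t*y)]
  · intro t
    have := one_sub_cos_le2 (t * y)
    nlinarith [sq_nonneg y]

lemma laplace_u {t : ℝ} (ht : 0 < t) :
    IntegrableOn (fun u => u * Real.exp (-t * u)) (Ioi 0) ∧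
    ∫ u in Ioi (0:ℝ), u * Real.exp (-t * u) = 1 / t^2 := by
  have h1 := Real.integral_rpow_mul_exp_neg_mul_Ioi (a := 2) (r := t) (by norm_num) ht
  have h2 := integrableOn_rpow_mul_exp_neg_mul_rpow (s := 1) (p := 1) (b := t) (by norm_num)
    one_pos ht
  have e : (2 - 1 : ℝ) = 1 := by norm_num
  simp only [e, Real.rpow_one, Real.Gamma_two, mul_one, Real.rpow_two] at h1 h2
  constructor
  · exact h2
  · rw [one_div_pow] at h1
    rw [← h1]
    simp only [neg_mul]

lemma laplace_cos {u : ℝ} (hu : 0 < u) :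
    ∫ t in Ioi (0:ℝ), (1 - Real.cos t) * (u * Real.exp (-t * u)) = (1 + u^2)⁻¹ := by
  have h0 := integral_exp_mul_complex_Ioi (a := ((-u : ℝ) : ℂ)) (by simpa using hu) 0
  have h1 := integral_exp_mul_complex_Ioi (a := (-u : ℂ) + Complex.I) (by simpa using hu) 0
  have i0 := integrableOn_exp_mul_complex_Ioi (a := ((-u : ℝ) : ℂ)) (by simpa using hu) 0
  have i1 := integrableOn_exp_mul_complex_Ioi (a := (-u : ℂ) + Complex.I) (by simpa using hu) 0
  have h2 := integral_sub i0 i1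
  rw [h0, h1] at h2
  have h3 := congrArg Complex.re h2
  have h4 := integral_re (i0.sub i1)
  simp only [RCLike.re_to_complex, Pi.sub_apply] at h4
  rw [← h4] at h3
  have e : ∀ t : ℝ, (Complex.exp (((-u : ℝ) : ℂ) * t) - Complex.exp ((-u + Complex.I) * t)).re
      = (1 - Real.cos t) * Real.exp (-t * u) := by
    intro t
    simp [Complex.exp_re]
    ring_nf
  simp_rw [e] at h3
  have : ∀ t : ℝ, (1 - Real.cos t) * (u * Real.exp (-t * u)) =
    u * ((1 - Real.cos t) * Real.exp (-t * u)) := fun t => by ring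
  simp_rw [this]
  rw [integral_const_mul, h3]
  simp [Complex.div_re, Complex.normSq_apply]
  field_simp
  ring

lemma integral_K : ∫ t in Ioi (0:ℝ), (1 - Real.cos t) / t^2 = Real.pi / 2 := by
  have hK : IntegrableOn (fun t => (1 - Real.cos t) / t^2) (Ioi 0) := by
    simpa using integrable_cos 1
  have e1 : ∀ t ∈ Ioi (0:ℝ), ∫ u in Ioi (0:ℝ), (1 - Real.cos t) * (u * Real.exp (-t * u))
      = (1 - Real.cos t) / t^2 := by
    intro t ht
    rw [integral_const_mul, (laplace_u ht).2]; ring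
  have hInt : Integrable (Function.uncurry fun t u : ℝ =>
      (1 - Real.cos t) * (u * Real.exp (-t * u)))
      ((volume.restrict (Ioi (0:ℝ))).prod (volume.restrict (Ioi (0:ℝ)))) := by
    rw [integrable_prod_iff (Continuous.aestronglyMeasurable (by fun_prop))]
    constructor
    · refine (ae_restrict_mem measurableSet_Ioi).mono fun t ht => ?_
      exact (laplace_u ht).1.const_mul (1 - Real.cos t)
    · refine hK.congr ?_
      refine (ae_restrict_mem measurableSet_Ioi).mono fun t ht => ?_
      simp only
      rw [← e1 t ht]
      refine setIntegral_congr_fun measurableSet_Ioi fun u hu => ?_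
      have hu : 0 < u := hu
      simp only [Function.uncurry]
      rw [Real.norm_of_nonneg]
      have := Real.cos_le_one t
      exact mul_nonneg (by linarith) (by positivity)
  have hs := integral_integral_swap hInt
  rw [setIntegral_congr_fun measurableSet_Ioi e1,
    setIntegral_congr_fun measurableSet_Ioi (fun u hu => laplace_cos hu),
    integral_Ioi_inv_one_add_sq] at hs
  simpa using hs

lemma integral_cos (y : ℝ) :
    ∫ t in Ioi (0:ℝ), (1 - Real.cos (t * y)) / t^2 = Real.pi / 2 * |y| := by
  rcases eq_or_ne y 0 with rfl | hy
  · simp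
  have hy' := abs_pos.2 hy
  have h := integral_comp_mul_left_Ioi (fun t => (1 - Real.cos t) / t^2) 0 hy'
  rw [mul_zero, integral_K] at h
  have e : ∀ t : ℝ, (1 - Real.cos (t * y)) / t^2 =
      |y|^2 * ((1 - Real.cos (|y| * t)) / (|y| * t)^2) := by
    intro t
    have : Real.cos (|y| * t) = Real.cos (t * y) := by
      rcases abs_cases y with ⟨h, _⟩ | ⟨h, _⟩ <;> rw [h]
      · rw [mul_comm]
      · rw [← Real.cos_neg]; ring_nf
    rw [this]
    rcases eq_or_ne t 0 with rfl | ht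
    · simp
    · field_simp
  simp_rw [e]
  rw [integral_const_mul, h]
  simp only [smul_eq_mul]
  field_simp

end KS

namespace KS
open MeasureTheory Set Filter Topology

lemma integral_mul_left {E : Type*} [NormedAddCommGroup E] [NormedSpace ℝ E]
    [SecondCountableTopology E] (u : Circle) {f : Circle → E} (hf : Continuous f) :
    ∫ z, f (u * z) ∂circleHaar = ∫ z, f z ∂circleHaar := by
  borelize E
  have h := mp_mul u
  conv_rhs => rw [← h.map_eq]
  rw [integral_map h.measurable.aemeasurable hf.aestronglyMeasurable]

lemma exists_polar (c : ℂ) : ∃ v : Circle, c = (‖c‖ : ℂ) * v := by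
  refine ⟨Circle.exp c.arg, ?_⟩
  rw [Circle.coe_exp, Complex.norm_mul_exp_arg_mul_I]

lemma char_circle (c : ℂ) :
    ∫ z : Circle, Complex.exp (((c * z).re : ℝ) * Complex.I) ∂circleHaar = (J ‖c‖ : ℂ) := by
  obtain ⟨v, hv⟩ := exists_polar c
  set r := ‖c‖
  set f : Circle → ℂ := fun z => Complex.exp (((r * (z : ℂ).re : ℝ) : ℂ) * Complex.I) with hf
  have hfc : Continuous f := by fun_prop
  have e1 : ∀ z : Circle, Complex.exp (((c * z).re : ℝ) * Complex.I) = f (v * z) := by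
    intro z
    simp only [hf, Circle.coe_mul]
    congr 3
    rw [hv, mul_assoc, Complex.re_ofReal_mul]
  simp_rw [e1]
  rw [integral_mul_left v hfc]
  have h2 : ∫ z, f z ∂circleHaar = ∫ z, (1/2 : ℂ) * (f z + f ((-1) * z)) ∂circleHaar := by
    have hfc2 : Continuous (fun z => f ((-1) * z)) := hfc.comp (by fun_prop)
    rw [integral_const_mul, integral_add (integrable_cont hfc)
      (integrable_cont hfc2), integral_mul_left (-1) hfc]
    ring
  rw [h2, J, ← integral_complex_ofReal]
  congr 1
  ext z
  simp only [hf]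
  rw [Complex.ofReal_cos, Complex.cos]
  simp [neg_mul]
  ring

lemma char_torus {d : ℕ} (c : Fin d → ℂ) :
    ∫ z, Real.cos ((∑ j, c j * (z j : ℂ)).re) ∂(torusHaar d) = ∏ j, J ‖c j‖ := by
  have h := integral_fintype_prod_eq_prod (𝕜 := ℂ) (ι := Fin d) (E := fun _ => Circle)
    (μ := fun _ => circleHaar)
    (fun j z => Complex.exp (((c j * z).re : ℝ) * Complex.I))
  simp_rw [char_circle] at h
  have e : ∀ z : Fin d → Circle, ∏ j, Complex.exp (((c j * z j).re : ℝ) * Complex.I) =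
      Complex.exp (((∑ j, c j * (z j : ℂ)).re : ℝ) * Complex.I) := by
    intro z
    rw [← Complex.exp_sum, Complex.re_sum, Complex.ofReal_sum, Finset.sum_mul]
  simp_rw [e] at h
  have h2 := congrArg Complex.re h
  rw [← Complex.ofReal_prod, Complex.ofReal_re] at h2
  rw [← h2]
  have hi : Integrable (fun z : Fin d → Circle =>
    Complex.exp (((∑ j, c j * (z j : ℂ)).re : ℝ) * Complex.I)) (torusHaar d) :=
    integrable_cont (by fun_prop)
  have h4 := integral_re hi
  simp only [RCLike.re_to_complex] at h4
  rw [torusHaar] at h4 ⊢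
  rw [← h4]
  congr 1
  ext z
  rw [Complex.exp_ofReal_mul_I_re]

lemma integral_abs_cos : ∫ θ in (0:ℝ)..(2 * Real.pi), |Real.cos θ| = 4 := by
  have hp : Function.Periodic (fun θ => |Real.cos θ|) Real.pi := by
    intro θ
    simp only [Real.cos_add_pi, abs_neg]
  have hc : Continuous (fun θ => |Real.cos θ|) := by fun_prop
  have h1 : ∀ t : ℝ, ∫ θ in t..(t + Real.pi), |Real.cos θ| = 2 := by
    intro t
    rw [hp.intervalIntegral_add_eq t (-(Real.pi/2))]
    rw [show -(Real.pi/2) + Real.pi = Real.pi / 2 by ring]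
    rw [intervalIntegral.integral_congr (g := Real.cos)]
    · rw [_root_.integral_cos]; simp; norm_num
    · intro x hx
      rw [uIcc_of_le (by linarith [Real.pi_pos])] at hx
      exact abs_of_nonneg (Real.cos_nonneg_of_mem_Icc hx)
  rw [← intervalIntegral.integral_add_adjacent_intervals (b := Real.pi)
    (hc.intervalIntegrable _ _) (hc.intervalIntegrable _ _)]
  have h2 := h1 0
  have h3 := h1 Real.pi
  rw [zero_add] at h2
  rw [two_mul, h2, h3]
  norm_num

lemma avg_abs_re (s : ℂ) : ∫ u : Circle, |((u : ℂ) * s).re| ∂circleHaar = 2 / Real.pi * ‖s‖ := by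
  obtain ⟨v, hv⟩ := exists_polar s
  have e1 : ∀ z : Circle, |((z : ℂ) * s).re| = ‖s‖ * |((v * z : Circle) : ℂ).re| := by
    intro z
    conv_lhs => rw [hv]
    rw [show (z : ℂ) * ((‖s‖ : ℂ) * v) = ((‖s‖ : ℝ) : ℂ) * ((v : ℂ) * z) by ring,
      Complex.re_ofReal_mul, abs_mul, abs_norm, Circle.coe_mul]
  simp_rw [e1]
  rw [integral_const_mul, integral_mul_left v (f := fun z : Circle => |(z : ℂ).re|) (by fun_prop),
    integral_circle (by fun_prop)]
  simp_rw [exp_re]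
  rw [integral_abs_cos]
  have := Real.pi_pos
  simp
  field_simp
  norm_num

/-- the random sum -/
noncomputable def S {d : ℕ} (b : Fin d → ℂ) (z : Fin d → Circle) : ℂ := ∑ j, b j * (z j : ℂ)

lemma S_cont {d : ℕ} (b : Fin d → ℂ) : Continuous (S b) := by unfold S; fun_prop

lemma norm_S_le {d : ℕ} (b : Fin d → ℂ) (z : Fin d → Circle) : ‖S b z‖ ≤ ∑ j, ‖b j‖ := by
  refine (norm_sum_le _ _).trans (le_of_eq ?_)
  simp [Circle.norm_coe]

lemma E_abs_re {d : ℕ} (b : Fin d → ℂ) :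
    ∫ z, |(S b z).re| ∂(torusHaar d) = 2 / Real.pi * ∫ z, ‖S b z‖ ∂(torusHaar d) := by
  have := S_cont b
  rw [integral_rot Finset.univ (F := fun z => |(S b z).re|) (by fun_prop), ← integral_const_mul]
  congr 1
  ext z
  rw [← avg_abs_re]
  congr 1
  ext u
  simp only [S, Finset.mem_univ, if_true, Circle.coe_mul, Finset.mul_sum]
  congr 3
  ext j
  ring

lemma cos_div_bound {B y t : ℝ} (hy : |y| ≤ B) :
    ‖(1 - Real.cos (t * y)) / t^2‖ ≤ 2 * (B^2 + 2) * (1 + t^2)⁻¹ := by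
  rcases eq_or_ne t 0 with rfl | ht
  · simp; positivity
  have ht2 : 0 < t^2 := by positivity
  have hy2 : y^2 ≤ B^2 := by rw [← sq_abs]; gcongr
  rw [Real.norm_eq_abs, abs_div, abs_of_pos ht2, div_le_iff₀ ht2,
      ← div_eq_mul_inv, div_mul_eq_mul_div, le_div_iff₀ (by positivity)]
  have h1 := one_sub_cos_le (t * y)
  have h2 := one_sub_cos_le2 (t * y)
  have h3 := mul_le_mul_of_nonneg_right h2 ht2.le
  have h4 := mul_le_mul_of_nonneg_right hy2 ht2.le
  have h5 : 0 ≤ B^2 * t^2 := by positivity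
  nlinarith

lemma integral_norm_S {d : ℕ} (b : Fin d → ℂ) :
    ∫ z, ‖S b z‖ ∂(torusHaar d) =
      ∫ t in Ioi (0:ℝ), (1 - ∏ j, J (t * ‖b j‖)) / t^2 := by
  have hS := S_cont b
  have h1 : ∫ z, ‖S b z‖ ∂(torusHaar d) = ∫ z, (∫ t in Ioi (0:ℝ),
      (1 - Real.cos (t * (S b z).re)) / t^2) ∂(torusHaar d) := by
    simp_rw [KS.integral_cos]
    rw [integral_const_mul, E_abs_re]
    have := Real.pi_pos
    field_simp
  have hInt : Integrable (Function.uncurry fun (z : Fin d → Circle) (t : ℝ) =>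
      (1 - Real.cos (t * (S b z).re)) / t^2) ((torusHaar d).prod (volume.restrict (Ioi (0:ℝ)))) := by
    have hg : Integrable (fun x : ℝ => 2 * ((∑ j, ‖b j‖)^2 + 2) * (1 + x^2)⁻¹)
        (volume.restrict (Ioi (0:ℝ))) :=
      (integrable_inv_one_add_sq.const_mul _).integrableOn
    refine Integrable.mono' (hg.comp_snd (torusHaar d)) ?_ ?_
    · have hc : Continuous (fun p : (Fin d → Circle) × ℝ => 1 - Real.cos (p.2 * (S b p.1).re)) := by
        fun_prop
      exact (hc.measurable.div (measurable_snd.pow_const 2)).aestronglyMeasurable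
    · refine Eventually.of_forall fun p => ?_
      exact cos_div_bound ((Complex.abs_re_le_norm _).trans (norm_S_le b p.1))
  rw [h1, integral_integral_swap hInt]
  refine setIntegral_congr_fun measurableSet_Ioi fun t ht => ?_
  have ht : 0 < t := ht
  rw [integral_div, integral_sub (integrable_const _) (integrable_cont (by fun_prop))]
  have h2 := char_torus (fun j => (t : ℂ) * b j)
  have e : ∀ z : Fin d → Circle, (∑ j, (t : ℂ) * b j * (z j : ℂ)).re = t * (S b z).re := by
    intro z
    rw [S, ← Complex.re_ofReal_mul, Finset.mul_sum]
    simp only [mul_assoc]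
  beta_reduce at h2
  simp_rw [e] at h2
  rw [h2]
  simp [abs_of_pos ht]

lemma norm_one_add_exp (θ : ℝ) : ‖(1:ℂ) + (Circle.exp θ : Circle)‖ = 2 * |Real.cos (θ / 2)| := by
  rw [Circle.coe_exp]
  have : (1:ℂ) + Complex.exp (θ * Complex.I) =
      ((2 * Real.cos (θ/2) : ℝ) : ℂ) * Complex.exp ((θ/2 : ℝ) * Complex.I) := by
    push_cast
    rw [Complex.cos, mul_div_cancel₀ _ (by norm_num : (2:ℂ) ≠ 0),
      add_mul, ← Complex.exp_add, ← Complex.exp_add]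
    ring_nf
    simp [add_comm]
  rw [this, norm_mul, Complex.norm_exp_ofReal_mul_I, Complex.norm_real, mul_one, Real.norm_eq_abs,
    abs_mul]
  norm_num

lemma D_two : ∫ t in Ioi (0:ℝ), (1 - J t ^ 2) / t^2 = 4 / Real.pi := by
  have h := integral_norm_S (d := 2) (fun _ => 1)
  simp only [Fin.prod_univ_two, norm_one, mul_one, ← sq] at h
  rw [← h]
  have hS := S_cont (d := 2) (fun _ => 1)
  rw [integral_rot {0} (F := fun z => ‖S (d := 2) (fun _ => 1) z‖) (by fun_prop)]
  have e : ∀ z : Fin 2 → Circle, ∫ u : Circle, ‖S (fun _ => 1)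
      (fun j => (if j ∈ ({0} : Finset (Fin 2)) then u else 1) * z j)‖ ∂circleHaar = 4 / Real.pi := by
    intro z
    have e2 : ∀ u : Circle, ‖S (fun _ => 1)
      (fun j => (if j ∈ ({0} : Finset (Fin 2)) then u else 1) * z j)‖ =
      ‖(1:ℂ) + (((z 1)⁻¹ * z 0) * u : Circle)‖ := by
      intro u
      simp only [S, Fin.sum_univ_two, Finset.mem_singleton, if_true, one_mul, Fin.isValue,
        one_ne_zero, if_false, Circle.coe_mul]
      rw [← one_mul ‖(1:ℂ) + _‖, ← Circle.norm_coe (z 1), ← norm_mul, mul_add, ← mul_assoc, ← mul_assoc,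
        ← Circle.coe_mul (z 1), mul_inv_cancel, Circle.coe_one]
      congr 1
      ring
    simp_rw [e2]
    rw [integral_mul_left _ (f := fun u : Circle => ‖(1:ℂ) + u‖) (by fun_prop),
      integral_circle (by fun_prop)]
    simp_rw [norm_one_add_exp]
    rw [intervalIntegral.integral_const_mul,
      intervalIntegral.integral_comp_div (fun θ => |Real.cos θ|) (by norm_num)]
    have h5 := integral_abs_cos
    have hp : ∫ θ in (0:ℝ)..Real.pi, |Real.cos θ| = 2 := by
      have hp : Function.Periodic (fun θ => |Real.cos θ|) Real.pi := by
        intro θ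
        simp only [Real.cos_add_pi, abs_neg]
      have hc : Continuous (fun θ => |Real.cos θ|) := by fun_prop
      have h6 := hp.intervalIntegral_add_eq Real.pi 0
      rw [zero_add, ← two_mul] at h6
      rw [← intervalIntegral.integral_add_adjacent_intervals (b := Real.pi)
        (hc.intervalIntegrable _ _) (hc.intervalIntegrable _ _), h6] at h5
      linarith
    rw [zero_div, mul_div_cancel_left₀ _ (by norm_num : (2:ℝ) ≠ 0), hp]
    have := Real.pi_pos
    simp
    field_simp
    norm_num
  simp_rw [e]
  simp

end KS

namespace KS
open MeasureTheory Set Filter Topology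

noncomputable def P3 (x : ℝ) : ℝ := 1 - x^2/4 + x^4/64 - x^6/2304

lemma P3_nonneg {x : ℝ} (h0 : 0 ≤ x) (h1 : x ≤ 2.3) : 0 ≤ P3 x := by
  have hw : x^2/4 ≤ 1.3225 := by nlinarith
  have hw0 : 0 ≤ x^2/4 := by positivity
  have e : P3 x = 1 - x^2/4 + (x^2/4)^2/4 - (x^2/4)^3/36 := by unfold P3; ring
  rw [e]
  generalize x^2/4 = w at hw hw0
  have h2 : w^2 ≤ 1.3225 * w := by nlinarith
  have h3 : w^3 ≤ 1.3225 * w^2 := by nlinarith [sq_nonneg w]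
  nlinarith [sq_nonneg (w - 1.3225)]

lemma P3_le_J (x : ℝ) : P3 x ≤ J x := J_lower6 x

lemma J_le_exp {x : ℝ} (h0 : 0 ≤ x) (h1 : x ≤ 2.3) : J x ≤ Real.exp (-(x^2/4)) := by
  have hw : x^2/4 ≤ 1.3225 := by nlinarith
  have hw0 : 0 ≤ x^2/4 := by positivity
  have h2 := exp_b3 hw0
  have h3 := J_upper4 x
  have e : x^4/64 = (x^2/4)^2/4 := by ring
  rw [e] at h3
  generalize x^2/4 = w at *
  have h3 : w^3 ≤ 1.5 * w^2 := by nlinarith [sq_nonneg w]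
  linarith

lemma P3_ge {x : ℝ} (h0 : 0 ≤ x) (h1 : x ≤ 1.65) : 0.426 ≤ P3 x := by
  have hw : x^2/4 ≤ 0.680625 := by nlinarith
  have hw0 : 0 ≤ x^2/4 := by positivity
  have e : P3 x = 1 - x^2/4 + (x^2/4)^2/4 - (x^2/4)^3/36 := by unfold P3; ring
  rw [e]
  generalize x^2/4 = w at hw hw0
  have h3 : w^3 ≤ 0.680625 * w^2 := by nlinarith [sq_nonneg w]
  nlinarith [sq_nonneg (w - 0.680625)]

lemma V_le_U {x : ℝ} (h0 : 0 ≤ x) (h1 : x ≤ 2.3) : J x ^ 2 ≤ Real.exp (-(x^2/2)) := by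
  have h2 := J_le_exp h0 h1
  have h3 := (P3_nonneg h0 h1).trans (P3_le_J x)
  have e : Real.exp (-(x^2/2)) = Real.exp (-(x^2/4)) ^ 2 := by
    rw [← Real.exp_nat_mul]; congr 1; push_cast; ring
  rw [e]
  gcongr

lemma bern {U V m σ : ℝ} (hm : 0 < m) (hV : m ≤ V) (hU : V ≤ U) (hσ : 1 ≤ σ) :
    σ * m^(σ-1) * (U - V) ≤ U^σ - V^σ := by
  have hV0 : 0 < V := hm.trans_le hV
  have h1 := one_add_mul_self_le_rpow_one_add (s := (U - V)/V) (p := σ)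
    (by have : 0 ≤ (U-V)/V := div_nonneg (by linarith) hV0.le
        linarith) hσ
  have e1 : 1 + (U - V)/V = U / V := by field_simp; ring
  rw [e1, Real.div_rpow (by linarith) hV0.le] at h1
  have hp : 0 < V^σ := Real.rpow_pos_of_pos hV0 _
  rw [le_div_iff₀ hp] at h1
  have e2 : V^σ = V^(σ-1) * V := by
    rw [Real.rpow_sub_one hV0.ne']; field_simp
  have h3 : m^(σ-1) ≤ V^(σ-1) := Real.rpow_le_rpow hm.le hV (by linarith)
  have e3 : (1 + σ * ((U - V) / V)) * V^σ = V^σ + σ * V^(σ-1) * (U - V) := by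
    have e4 : (U - V) / V * V^σ = V^(σ-1) * (U - V) := by rw [e2]; field_simp
    linear_combination σ * e4
  rw [e3] at h1
  have h4 : σ * m^(σ-1) * (U - V) ≤ σ * V^(σ-1) * (U - V) := by
    apply mul_le_mul_of_nonneg_right _ (by linarith)
    apply mul_le_mul_of_nonneg_left h3 (by linarith)
  linarith

lemma tail_rpow {V m σ : ℝ} (hV0 : 0 ≤ V) (hV : V ≤ m) (hm : 0 < m) (hσ : 1 ≤ σ) :
    V^σ ≤ σ * m^(σ-1) * V := by
  rcases hV0.eq_or_lt with rfl | h
  · rw [Real.zero_rpow (by linarith)]; simp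
  have e2 : V^σ = V^(σ-1) * V := by
    rw [Real.rpow_sub_one h.ne']; field_simp
  rw [e2]
  apply mul_le_mul_of_nonneg_right _ hV0
  have h3 : V^(σ-1) ≤ m^(σ-1) := Real.rpow_le_rpow hV0 hV (by linarith)
  have : 0 < m^(σ-1) := Real.rpow_pos_of_pos hm _
  nlinarith

lemma laurent_int {a b : ℝ} (ha : 0 < a) (hab : a ≤ b) (c0 c1 c2 c3 c4 c5 c6 : ℝ) :
    ∫ x in a..b, (c0 + c1 * x^2 + c2 * x^4 + c3 * x^6 + c4 * x^8 + c5 * x^10 + c6 * x^12) / x^2 =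
    (-c0/b + c1*b + c2*b^3/3 + c3*b^5/5 + c4*b^7/7 + c5*b^9/9 + c6*b^11/11) -
    (-c0/a + c1*a + c2*a^3/3 + c3*a^5/5 + c4*a^7/7 + c5*a^9/9 + c6*a^11/11) := by
  have hpos : ∀ x ∈ uIcc a b, x ≠ 0 := by
    intro x hx
    rw [uIcc_of_le hab] at hx
    exact (ha.trans_le hx.1).ne'
  refine intervalIntegral.integral_eq_sub_of_hasDerivAt
    (f := fun b => -c0/b + c1*b + c2*b^3/3 + c3*b^5/5 + c4*b^7/7 + c5*b^9/9 + c6*b^11/11) ?_ ?_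
  · intro x hx
    have hx := hpos x hx
    have hp : ∀ (c : ℝ) (n : ℕ), HasDerivAt (fun b : ℝ => c * b^n / n) (c * (n * x^(n-1)) / n) x :=
      fun c n => ((hasDerivAt_pow n x).const_mul c).div_const _
    have h0 : HasDerivAt (fun b : ℝ => -c0/b) (c0/x^2) x := by
      refine ((hasDerivAt_const x (-c0)).div (hasDerivAt_id x) hx).congr_deriv ?_
      simp
    have h1 : HasDerivAt (fun b : ℝ => c1 * b) c1 x := by
      simpa using (hasDerivAt_id x).const_mul c1
    have H := (((((h0.add h1).add (hp c2 3)).add (hp c3 5)).add (hp c4 7)).add (hp c5 9)).add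
      (hp c6 11)
    refine (H.congr_deriv ?_)
    push_cast
    field_simp
  · refine ContinuousOn.intervalIntegrable ?_
    refine ContinuousOn.div (by fun_prop) (by fun_prop) fun x hx => pow_ne_zero _ (hpos x hx)

lemma exp_c1 : Real.exp (-1.36125) ≤ 0.25635 := by
  have h := Real.sum_le_exp_of_nonneg (x := 1.36125) (by norm_num) 9
  simp only [Finset.sum_range_succ, Finset.sum_range_zero, Nat.factorial] at h
  rw [Real.exp_neg, inv_le_comm₀ (Real.exp_pos _) (by norm_num)]
  refine le_trans ?_ h
  norm_num

lemma exp_c2 : Real.exp (-2.645) ≤ 0.07102 := by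
  have h := Real.sum_le_exp_of_nonneg (x := 2.645) (by norm_num) 12
  simp only [Finset.sum_range_succ, Finset.sum_range_zero, Nat.factorial] at h
  rw [Real.exp_neg, inv_le_comm₀ (Real.exp_pos _) (by norm_num)]
  refine le_trans ?_ h
  norm_num

lemma mid_cont : ContinuousOn (fun x : ℝ => (Real.exp (-(x^2/2)) - P3 x ^ 2) / x^2) (Icc 1.65 2.3) := by
  unfold P3
  refine ContinuousOn.div (by fun_prop) (by fun_prop) fun x hx => pow_ne_zero _ ?_
  have := hx.1
  intro h
  rw [h] at this
  norm_num at this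

lemma mid_int : ∫ x in (1.65:ℝ)..2.3, (Real.exp (-(x^2/2)) - P3 x ^ 2) / x^2 ≤ 0.01407 := by
  have hl := laurent_int (a := 1.65) (b := 2.3) (by norm_num) (by norm_num)
    (-834949519038931/65536000000000000) (1012031827379/40960000000000)
    (2376061767/204800000000) (-9054709/2304000000) (1189/5760000) (1/73728) (-1/5308416)
  refine le_trans (intervalIntegral.integral_mono_on (by norm_num) ?_ ?_ ?_) (hl.le.trans ?_)
  · refine ContinuousOn.intervalIntegrable ?_
    rw [uIcc_of_le (by norm_num)]
    exact mid_cont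
  · refine ContinuousOn.intervalIntegrable ?_
    rw [uIcc_of_le (by norm_num)]
    refine ContinuousOn.div (by fun_prop) (by fun_prop) fun x hx => pow_ne_zero _ ?_
    have := hx.1
    intro h
    rw [h] at this
    norm_num at this
  · intro x hx
    have hv : 0 ≤ (x^2 - 2.7225)/2 := by nlinarith [hx.1]
    have h1 := exp_b4 hv
    have h2 : Real.exp (-(x^2/2)) = Real.exp (-1.36125) * Real.exp (-((x^2 - 2.7225)/2)) := by
      rw [← Real.exp_add]; congr 1; ring
    have h3 := mul_le_mul exp_c1 (sub_nonneg.1 h1) (Real.exp_pos _).le (by norm_num)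
    rw [h2]
    refine div_le_div_of_nonneg_right ?_ (sq_nonneg x)
    refine (sub_le_sub_right h3 _).trans (le_of_eq ?_)
    unfold P3
    ring
  · norm_num

lemma tail_int {a : ℝ} (ha : 2 ≤ a) :
    IntegrableOn (fun x : ℝ => Real.exp (-(x^2/2)) / x^2) (Ioi a) ∧
    ∫ x in Ioi a, Real.exp (-(x^2/2)) / x^2 ≤ Real.exp (-(a^2/2)) / (a^3 + 2*a) := by
  have hd : ∀ x ∈ Ici a, HasDerivAt (fun x : ℝ => -(Real.exp (-(x^2/2)) / (x^3 + 2*x)))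
      (Real.exp (-(x^2/2)) / x^2 * ((x^4 + 5*x^2 + 2) / (x^4+4*x^2+4))) x := by
    intro x hx
    have hx : 0 < x := by have : a ≤ x := hx
                          linarith
    have h1 : HasDerivAt (fun x : ℝ => Real.exp (-(x^2/2))) (-x * Real.exp (-(x^2/2))) x := by
      refine ((((hasDerivAt_pow 2 x).div_const 2).neg).exp).congr_deriv ?_
      norm_num; ring
    have h2 : HasDerivAt (fun x : ℝ => x^3 + 2*x) (3*x^2+2) x := by
      refine ((hasDerivAt_pow 3 x).add ((hasDerivAt_id x).const_mul 2)).congr_deriv ?_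
      norm_num
    have h3 : x^3 + 2*x ≠ 0 := by positivity
    refine ((h1.div h2 h3).neg).congr_deriv ?_
    rw [show x^4+4*x^2+4 = (x^2+2)^2 by ring, show x^3+2*x = x*(x^2+2) by ring]
    field_simp
    ring
  have hn : ∀ x ∈ Ioi a, 0 ≤ Real.exp (-(x^2/2)) / x^2 * ((x^4 + 5*x^2 + 2) / (x^4+4*x^2+4)) := by
    intro x hx; positivity
  have ht : Tendsto (fun x : ℝ => -(Real.exp (-(x^2/2)) / (x^3 + 2*x))) atTop (𝓝 0) := by
    apply squeeze_zero_norm' (a := fun x => x⁻¹)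
    · filter_upwards [eventually_gt_atTop 1] with x hx
      have hx0 : 0 < x := by linarith
      rw [norm_neg, Real.norm_of_nonneg (by positivity), inv_eq_one_div]
      apply div_le_div₀ zero_le_one _ hx0 _
      · apply Real.exp_le_one_iff.2; nlinarith
      · nlinarith [pow_pos hx0 3]
    · exact tendsto_inv_atTop_zero
  have i1 := integrableOn_Ioi_deriv_of_nonneg' hd hn ht
  have i2 := integral_Ioi_of_hasDerivAt_of_nonneg' hd hn ht
  have hle : ∀ x ∈ Ioi a, Real.exp (-(x^2/2)) / x^2 ≤
      Real.exp (-(x^2/2)) / x^2 * ((x^4 + 5*x^2 + 2) / (x^4+4*x^2+4)) := by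
    intro x hx
    have hx : a < x := hx
    apply le_mul_of_one_le_right (by positivity)
    rw [one_le_div (by positivity)]
    nlinarith
  have i3 : IntegrableOn (fun x : ℝ => Real.exp (-(x^2/2)) / x^2) (Ioi a) := by
    refine Integrable.mono' i1 ?_ ?_
    · have : Measurable (fun x : ℝ => Real.exp (-(x^2/2)) / x^2) := by fun_prop
      exact this.aestronglyMeasurable
    · refine (ae_restrict_mem measurableSet_Ioi).mono fun x hx => ?_
      rw [Real.norm_of_nonneg (by positivity)]
      exact hle x hx
  refine ⟨i3, (setIntegral_mono_on i3 i1 measurableSet_Ioi hle).trans ?_⟩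
  rw [i2]
  simp

lemma tail_num : ∫ x in Ioi (2.3:ℝ), Real.exp (-(x^2/2)) / x^2 ≤ 0.004236 := by
  refine (tail_int (by norm_num)).2.trans ?_
  have h := exp_c2
  rw [show -((2.3:ℝ)^2/2) = -2.645 by norm_num, div_le_iff₀ (by norm_num)]
  refine h.trans ?_
  norm_num

lemma D_num : 0.0199 ≤ 4 / Real.pi - Real.sqrt (Real.pi * (1/2)) := by
  have h1 := Real.pi_lt_d4
  have h2 : (1.27323:ℝ) ≤ 4 / Real.pi := by
    rw [le_div_iff₀ Real.pi_pos]; nlinarith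
  have h3 : Real.sqrt (Real.pi * (1/2)) ≤ 1.25332 := by
    rw [Real.sqrt_le_left (by norm_num)]; nlinarith
  linarith

lemma J2_le (x : ℝ) : J x ^ 2 ≤ 1 := by
  have := J_abs_le_one x
  rw [← sq_abs]; nlinarith [abs_nonneg (J x)]

lemma one_sub_J2_le (x : ℝ) : 1 - J x ^ 2 ≤ x^2/2 := by
  have := J_lower2 x
  nlinarith [sq_nonneg (J x - 1)]

lemma one_sub_rpow_le {V σ : ℝ} (h0 : 0 ≤ V) (h1 : V ≤ 1) (hσ : 1 ≤ σ) :
    0 ≤ 1 - V^σ ∧ 1 - V^σ ≤ 1 ∧ 1 - V^σ ≤ σ * (1 - V) := by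
  have a := Real.rpow_le_one h0 h1 (by linarith : 0 ≤ σ)
  have b := Real.rpow_nonneg h0 σ
  have c := one_add_mul_self_le_rpow_one_add (s := V - 1) (by linarith) hσ
  rw [add_sub_cancel] at c
  refine ⟨by linarith, by linarith, by linarith⟩

lemma integrable_V {σ : ℝ} (hσ : 1 ≤ σ) :
    IntegrableOn (fun x => (1 - (J x ^ 2)^σ) / x^2) (Ioi 0) := by
  have hc := J_continuous
  refine integrable_div_sq (C := σ) (f := fun x => 1 - (J x ^ 2)^σ) ?_ ?_ ?_
  · exact continuous_const.sub ((hc.pow 2).rpow_const fun x => Or.inr (by linarith))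
  all_goals
    intro x
    obtain ⟨h1, h2, h3⟩ := one_sub_rpow_le (sq_nonneg (J x)) (J2_le x) hσ
    rw [abs_of_nonneg h1]
    have := one_sub_J2_le x
    nlinarith [sq_nonneg x]

lemma F_lemma {σ : ℝ} (hσ : 1 ≤ σ) :
    Real.sqrt (Real.pi * (σ / 2)) ≤ ∫ x in Ioi (0:ℝ), (1 - (J x ^ 2)^σ) / x^2 := by
  set m : ℝ := 0.426^2 with hm
  have hm0 : 0 < m := by norm_num [hm]
  set κ := σ * m^(σ-1) with hκ
  have hκ0 : 0 < κ := by positivity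
  set L : ℝ → ℝ := fun x => (Ioc 1.65 2.3).indicator
      (fun x : ℝ => (Real.exp (-(x^2/2)) - P3 x ^ 2) / x^2) x +
      (Ioi 2.3).indicator (fun x : ℝ => Real.exp (-(x^2/2)) / x^2) x with hL
  have iM : IntegrableOn (fun x : ℝ => (Real.exp (-(x^2/2)) - P3 x ^ 2) / x^2) (Ioc 1.65 2.3) :=
    (mid_cont.integrableOn_compact isCompact_Icc).mono_set Ioc_subset_Icc_self
  have iT := (tail_int (a := 2.3) (by norm_num)).1
  have iM' : IntegrableOn ((Ioc 1.65 2.3).indicator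
      (fun x : ℝ => (Real.exp (-(x^2/2)) - P3 x ^ 2) / x^2)) (Ioi 0) :=
    ((integrable_indicator_iff measurableSet_Ioc).2 iM).integrableOn
  have iT' : IntegrableOn ((Ioi 2.3).indicator
      (fun x : ℝ => Real.exp (-(x^2/2)) / x^2)) (Ioi 0) :=
    ((integrable_indicator_iff measurableSet_Ioi).2 iT).integrableOn
  have iL : IntegrableOn L (Ioi 0) := iM'.add iT'
  have hLint : ∫ x in Ioi (0:ℝ), L x ≤ 0.0184 := by
    rw [hL, integral_add iM' iT', setIntegral_indicator measurableSet_Ioc,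
      setIntegral_indicator measurableSet_Ioi]
    rw [inter_eq_self_of_subset_right, inter_eq_self_of_subset_right]
    · rw [← intervalIntegral.integral_of_le (by norm_num)]
      have := mid_int
      have := tail_num
      linarith
    · exact Ioi_subset_Ioi (by norm_num)
    · intro x hx
      have := hx.1
      have h : (0:ℝ) < 1.65 := by norm_num
      exact h.trans this
  have iV1 : IntegrableOn (fun x => (1 - J x ^ 2) / x^2) (Ioi 0) := by
    simpa using integrable_V le_rfl
  have iVσ := integrable_V hσ
  have iU1 := integrable_gauss (a := 1/2) (by norm_num)
  have iUσ := integrable_gauss (a := σ/2) (by linarith)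
  have key : ∫ x in Ioi (0:ℝ), κ * (((1 - J x ^ 2) / x^2 - (1 - Real.exp (-(1/2) * x^2)) / x^2) - L x)
      ≤ ∫ x in Ioi (0:ℝ), ((1 - (J x ^ 2)^σ) / x^2 - (1 - Real.exp (-(σ/2) * x^2)) / x^2) := by
    refine setIntegral_mono_on (((iV1.sub iU1).sub iL).const_mul κ) (iVσ.sub iUσ)
      measurableSet_Ioi ?_
    intro x hx
    have hx : 0 < x := hx
    have hx2 : 0 < x^2 := by positivity
    have eU : Real.exp (-(1/2) * x^2) = Real.exp (-(x^2/2)) := by congr 1; ring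
    have eUσ : Real.exp (-(σ/2) * x^2) = Real.exp (-(x^2/2)) ^ σ := by
      rw [← Real.exp_mul]; congr 1; ring
    rw [eU, eUσ]
    set U := Real.exp (-(x^2/2))
    have hU0 : 0 < U := Real.exp_pos _
    have e1 : (1 - (J x ^ 2)^σ) / x^2 - (1 - U^σ) / x^2 = (U^σ - (J x ^ 2)^σ) / x^2 := by ring
    have e2 : (1 - J x ^ 2) / x^2 - (1 - U) / x^2 = (U - J x ^ 2) / x^2 := by ring
    rw [e1, e2]
    rcases le_or_gt x 1.65 with h | h
    · have h2 : L x = 0 := by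
        have : x ∉ Ioi (2.3:ℝ) := by
          intro h'; have : (2.3:ℝ) < x := h'; linarith
        have h'' : x ∉ Ioc (1.65:ℝ) 2.3 := by
          intro h'; have := h'.1; linarith
        simp only [hL, indicator_of_notMem this, indicator_of_notMem h'', add_zero]
      rw [h2, sub_zero, ← mul_div_assoc]
      apply div_le_div_of_nonneg_right _ hx2.le
      apply bern hm0 _ (V_le_U hx.le (by linarith)) hσ
      have := (P3_ge hx.le h).trans (P3_le_J x)
      rw [hm]
      gcongr
    rcases le_or_gt x 2.3 with h' | h'
    · have h2 : L x = (U - P3 x ^ 2) / x^2 := by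
        have h1 : x ∉ Ioi (2.3:ℝ) := by
          intro h''; have : (2.3:ℝ) < x := h''; linarith
        have h'' : x ∈ Ioc (1.65:ℝ) 2.3 := ⟨h, h'⟩
        simp only [hL, indicator_of_notMem h1, indicator_of_mem h'', add_zero]
        rfl
      rw [h2]
      have hP := P3_nonneg hx.le h'
      have hPJ := P3_le_J x
      have h3 : P3 x ^ 2 ≤ J x ^ 2 := by gcongr
      have h4 := V_le_U hx.le h'
      have h5 : (J x ^ 2)^σ ≤ U^σ := Real.rpow_le_rpow (sq_nonneg _) h4 (by linarith)
      have h6 : (U - J x ^ 2) / x^2 - (U - P3 x ^ 2) / x^2 ≤ 0 := by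
        rw [← sub_div]
        exact div_nonpos_of_nonpos_of_nonneg (by linarith) hx2.le
      have h7 : 0 ≤ (U^σ - (J x ^ 2)^σ) / x^2 := div_nonneg (by linarith) hx2.le
      nlinarith
    · have h2 : L x = U / x^2 := by
        have h1 : x ∈ Ioi (2.3:ℝ) := h'
        have h'' : x ∉ Ioc (1.65:ℝ) 2.3 := by
          intro h''; have := h''.2; linarith
        simp only [hL, indicator_of_mem h1, indicator_of_notMem h'', zero_add]
        rfl
      have hV : J x ^ 2 ≤ m := by
        have := J_tail h'.le
        rw [hm, ← sq_abs]
        gcongr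
      have h3 := tail_rpow (sq_nonneg (J x)) hV hm0 hσ
      have h4 := Real.rpow_nonneg hU0.le σ
      rw [h2, ← sub_div, ← mul_div_assoc]
      apply div_le_div_of_nonneg_right _ hx2.le
      linarith
  have iD : IntegrableOn (fun x => (1 - J x ^ 2) / x^2 - (1 - Real.exp (-(1/2) * x^2)) / x^2)
      (Ioi 0) := iV1.sub iU1
  rw [integral_const_mul, integral_sub iD iL, integral_sub iV1 iU1, D_two,
    integral_gauss (by norm_num), integral_sub iVσ iUσ, integral_gauss (by linarith)] at key
  have h1 := D_num
  have h2 : 0 ≤ κ * (4 / Real.pi - Real.sqrt (Real.pi * (1/2)) - ∫ x in Ioi (0:ℝ), L x) :=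
    mul_nonneg hκ0.le (by linarith)
  linarith

end KS

namespace KS
open MeasureTheory Set Filter Topology

lemma one_sub_prod_le {ι : Type*} (s : Finset ι) (f : ι → ℝ) (h : ∀ i, |f i| ≤ 1) :
    |1 - ∏ i ∈ s, f i| ≤ ∑ i ∈ s, |1 - f i| := by
  classical
  induction s using Finset.induction_on with
  | empty => simp
  | insert a s ha ih =>
    rw [Finset.prod_insert ha, Finset.sum_insert ha]
    have e : 1 - f a * ∏ i ∈ s, f i = (1 - f a) + f a * (1 - ∏ i ∈ s, f i) := by ring
    rw [e]
    refine (abs_add_le _ _).trans ?_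
    rw [abs_mul]
    have := mul_le_mul_of_nonneg_right (h a) (abs_nonneg (1 - ∏ i ∈ s, f i))
    linarith

lemma abs_one_sub_J (x : ℝ) : |1 - J x| ≤ x^2/4 := by
  have h := abs_le.1 (J_abs_le_one x)
  rw [abs_of_nonneg (by linarith)]
  linarith [J_lower2 x]

lemma integrable_prod {d : ℕ} (a : Fin d → ℝ) :
    IntegrableOn (fun t => (1 - ∏ j, J (t * a j)) / t^2) (Ioi 0) := by
  have hc := J_continuous
  refine integrable_div_sq (C := (∑ j, (a j)^2) + 2) (f := fun t => 1 - ∏ j, J (t * a j))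
    (by fun_prop) ?_ ?_
  · intro t
    refine (one_sub_prod_le _ _ fun j => J_abs_le_one _).trans ?_
    have : ∑ j, |1 - J (t * a j)| ≤ ∑ j, (a j)^2 * t^2 := by
      apply Finset.sum_le_sum
      intro j _
      have := abs_one_sub_J (t * a j)
      nlinarith [sq_nonneg (t * a j)]
    rw [← Finset.sum_mul] at this
    nlinarith [sq_nonneg t]
  · intro t
    have h1 : |∏ j, J (t * a j)| ≤ 1 := by
      rw [Finset.abs_prod]
      exact Finset.prod_le_one (fun _ _ => abs_nonneg _) fun j _ => J_abs_le_one _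
    have h2 : 0 ≤ ∑ j, (a j)^2 := Finset.sum_nonneg fun j _ => sq_nonneg _
    refine (abs_sub _ _).trans ?_
    rw [abs_one]
    linarith

lemma scaled {a : ℝ} (ha : 0 < a) (ha2 : a^2 ≤ 1/2) :
    IntegrableOn (fun t => (1 - (J (t * a) ^ 2)^(1/(2*a^2))) / t^2) (Ioi 0) ∧
    Real.sqrt Real.pi / 2 ≤ ∫ t in Ioi (0:ℝ), (1 - (J (t * a) ^ 2)^(1/(2*a^2))) / t^2 := by
  have hσ : 1 ≤ 1/(2*a^2) := by
    rw [le_div_iff₀ (by positivity)]; linarith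
  have h1 := F_lemma hσ
  have i1 := integrable_V hσ
  set σ := 1/(2*a^2) with hs
  have e : ∀ t : ℝ, (1 - (J (t * a) ^ 2)^σ) / t^2 =
      a^2 * ((1 - (J (a * t) ^ 2)^σ) / (a * t)^2) := by
    intro t
    rw [mul_comm t a]
    rcases eq_or_ne t 0 with rfl | ht
    · simp
    · field_simp
  simp_rw [e]
  have h := integral_comp_mul_left_Ioi (fun x => (1 - (J x ^ 2)^σ) / x^2) 0 ha
  have i2 := (integrableOn_Ioi_comp_mul_left_iff (fun x => (1 - (J x ^ 2)^σ) / x^2) 0 ha).2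
    (by simpa using i1)
  refine ⟨Integrable.const_mul i2 (a^2), ?_⟩
  rw [mul_zero] at h
  rw [integral_const_mul, h, smul_eq_mul]
  have e2 : Real.sqrt (Real.pi * (σ/2)) = Real.sqrt Real.pi / 2 * a⁻¹ := by
    rw [Real.sqrt_mul Real.pi_pos.le, show σ/2 = (a⁻¹/2)^2 by rw [hs]; field_simp,
      Real.sqrt_sq (by positivity)]
    ring
  rw [e2] at h1
  have h3 := mul_le_mul_of_nonneg_left h1 ha.le
  calc Real.sqrt Real.pi / 2 = a * (Real.sqrt Real.pi / 2 * a⁻¹) := by field_simp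
    _ ≤ _ := h3
    _ = _ := by field_simp

lemma caseA_real {d : ℕ} (a : Fin d → ℝ) (ha : ∀ j, 0 ≤ a j) (ha2 : ∀ j, a j ^ 2 ≤ 1/2)
    (hs : ∑ j, a j ^ 2 = 1) :
    Real.sqrt Real.pi / 2 ≤ ∫ t in Ioi (0:ℝ), (1 - ∏ j, J (t * a j)) / t^2 := by
  set Z : Fin d → ℝ → ℝ := fun j t => (J (t * a j) ^ 2)^(1/(2*a j^2)) with hZ
  have hI : ∀ j, IntegrableOn (fun t => a j ^ 2 * ((1 - Z j t) / t^2)) (Ioi 0) := by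
    intro j
    rcases (ha j).eq_or_lt with h | h
    · rw [← h]; simp
    · exact Integrable.const_mul (scaled h (ha2 j)).1 _
  have hle : ∫ t in Ioi (0:ℝ), ∑ j, a j ^ 2 * ((1 - Z j t) / t^2) ≤
      ∫ t in Ioi (0:ℝ), (1 - ∏ j, J (t * a j)) / t^2 := by
    refine setIntegral_mono_on (integrable_finsetSum _ fun j _ => hI j) (integrable_prod a)
      measurableSet_Ioi ?_
    intro t ht
    have h1 := Real.geom_mean_le_arith_mean_weighted Finset.univ (fun j => a j ^ 2)
      (fun j => Z j t) (fun j _ => sq_nonneg _) hs (fun j _ => Real.rpow_nonneg (sq_nonneg _) _)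
    have h2 : ∏ j, J (t * a j) ≤ ∏ j, Z j t ^ (a j ^ 2) := by
      refine (le_abs_self _).trans ?_
      rw [Finset.abs_prod]
      apply le_of_eq
      refine Finset.prod_congr rfl fun j _ => ?_
      simp only [hZ]
      rcases (ha j).eq_or_lt with h | h
      · rw [← h]; simp [J_zero]
      · rw [← Real.rpow_mul (sq_nonneg _), show 1/(2*a j^2) * a j^2 = 1/2 by field_simp,
          ← Real.sqrt_eq_rpow, Real.sqrt_sq_eq_abs]
    have h3 : ∑ j, a j ^ 2 * ((1 - Z j t) / t^2) = (1 - ∑ j, a j ^ 2 * Z j t) / t^2 := by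
      have h4 : 1 - ∑ j, a j ^ 2 * Z j t = ∑ j, (a j ^ 2 - a j ^ 2 * Z j t) := by
        rw [Finset.sum_sub_distrib, hs]
      rw [h4, Finset.sum_div]
      refine Finset.sum_congr rfl fun j _ => ?_
      ring
    rw [h3]
    apply div_le_div_of_nonneg_right _ (sq_nonneg t)
    linarith
  refine le_trans ?_ hle
  rw [integral_finsetSum _ fun j _ => hI j]
  calc Real.sqrt Real.pi / 2 = ∑ j, a j ^ 2 * (Real.sqrt Real.pi / 2) := by
        rw [← Finset.sum_mul, hs, one_mul]
    _ ≤ _ := by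
        refine Finset.sum_le_sum fun j _ => ?_
        rw [integral_const_mul]
        rcases (ha j).eq_or_lt with h | h
        · rw [← h]; simp
        · exact mul_le_mul_of_nonneg_left (scaled h (ha2 j)).2 (sq_nonneg _)

lemma caseA {d : ℕ} (b : Fin d → ℂ) (hs : 0 < ∑ j, ‖b j‖^2)
    (hb : ∀ k, 2 * ‖b k‖^2 ≤ ∑ j, ‖b j‖^2) :
    Real.sqrt Real.pi / 2 * Real.sqrt (∑ j, ‖b j‖ ^ 2) ≤ ∫ z, ‖S b z‖ ∂(torusHaar d) := by
  set N := Real.sqrt (∑ j, ‖b j‖ ^ 2) with hN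
  have hN0 : 0 < N := Real.sqrt_pos.2 hs
  have hN2 : N^2 = ∑ j, ‖b j‖ ^ 2 := Real.sq_sqrt hs.le
  set c : Fin d → ℂ := fun j => ((N⁻¹ : ℝ) : ℂ) * b j with hc
  have hcn : ∀ j, ‖c j‖ = N⁻¹ * ‖b j‖ := by
    intro j
    simp only [hc, norm_mul, Complex.norm_real, Real.norm_eq_abs, abs_of_pos (inv_pos.2 hN0)]
  have h := caseA_real (fun j => ‖c j‖) (fun j => norm_nonneg _) ?_ ?_
  · rw [← integral_norm_S] at h
    have e : ∀ z, ‖S c z‖ = N⁻¹ * ‖S b z‖ := by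
      intro z
      have : S c z = ((N⁻¹ : ℝ) : ℂ) * S b z := by
        simp only [S, hc, Finset.mul_sum, mul_assoc]
      rw [this, norm_mul, Complex.norm_real, Real.norm_eq_abs, abs_of_pos (inv_pos.2 hN0)]
    simp_rw [e] at h
    rw [integral_const_mul, inv_mul_eq_div, le_div_iff₀ hN0] at h
    exact h
  · intro j
    simp only [hcn, mul_pow, inv_pow]
    rw [inv_mul_le_iff₀ (by positivity), hN2]
    linarith [hb j]
  · simp only [hcn, mul_pow, inv_pow]
    rw [← Finset.mul_sum, hN2, inv_mul_cancel₀ hs.ne']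

end KS

namespace KS
open MeasureTheory Set Filter Topology

lemma mean_value {H : ℂ → ℂ} (hH : DiffContOnCl ℂ H (Metric.ball 0 1))
    (hc : Continuous fun u : Circle => H u) :
    ∫ u : Circle, (H u).re ∂circleHaar = (H 0).re := by
  have h1 := DiffContOnCl.circleAverage (f := H) (c := 0) (R := 1) (by simpa using hH)
  have h2 : ∫ u : Circle, H u ∂circleHaar = H 0 := by
    rw [integral_circle hc, ← h1, Real.circleAverage]
    simp [circleMap, Circle.coe_exp]
  have h3 := integral_re (integrable_cont (μ := circleHaar) hc)
  simp only [RCLike.re_to_complex] at h3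
  rw [h3, h2]

noncomputable def Ppol (w : ℂ) : ℂ := 1 + w/2 - w^2/8

noncomputable def Psi (R w : ℂ) : ℂ :=
  w * (1/8 - w/64) * (w^2 + R*w/2 - R^2/8) / Ppol w + w - w^2/4 - R*w/8

lemma Ppol_ne {w : ℂ} (hw : ‖w‖ ≤ 1) : Ppol w ≠ 0 := by
  intro h
  have h1 : (1:ℂ) = w^2/8 - w/2 := by
    unfold Ppol at h; linear_combination h
  have h2 : ‖(1:ℂ)‖ ≤ ‖w^2/8‖ + ‖w/2‖ := by
    conv_lhs => rw [h1]
    exact norm_sub_le _ _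
  simp at h2
  nlinarith [norm_nonneg w]

lemma pointwise {w : ℂ} (hw : ‖w‖ ≤ 1) :
    1 + ‖w‖^2/4 + ‖w‖^4/64 + (Psi ((‖w‖^2 : ℝ) : ℂ) w).re ≤ ‖1 + w‖ := by
  have hP := Ppol_ne hw
  set R : ℝ := ‖w‖^2 with hR
  have hwc : (R : ℂ) = w * (starRingEnd ℂ) w := by
    rw [Complex.mul_conj, Complex.normSq_eq_norm_sq]
  set A : ℂ := (starRingEnd ℂ) (Ppol w) / Ppol w with hA
  have hAn : ‖A‖ = 1 := by
    rw [hA, norm_div, Complex.norm_conj, div_self (norm_ne_zero_iff.2 hP)]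
  have h1 : ((1 + w) * A).re ≤ ‖1 + w‖ := by
    refine (Complex.re_le_norm _).trans ?_
    rw [norm_mul, hAn, mul_one]
  refine le_trans (le_of_eq ?_) h1
  have h2 : (1 + w) * A = Psi R w + (Ppol w * (starRingEnd ℂ) (Ppol w) - w + w^2/4 + R * w/8) := by
    have hc : (starRingEnd ℂ) (Ppol w) = 1 + (starRingEnd ℂ) w / 2 - (starRingEnd ℂ) w ^2/8 := by
      simp [Ppol, map_ofNat (starRingEnd ℂ) 2, map_ofNat (starRingEnd ℂ) 8]
    rw [hA, hc, Psi, hwc]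
    have hP' := hP
    field_simp
    unfold Ppol
    ring
  rw [h2, Complex.add_re]
  have h3 : (Ppol w * (starRingEnd ℂ) (Ppol w) - w + w^2/4 + R * w/8).re =
      1 + R/4 + R^2/64 := by
    have hR2 : R = w.re^2 + w.im^2 := by
      rw [hR, ← Complex.normSq_eq_norm_sq, Complex.normSq_apply]; ring
    have e : Ppol w * (starRingEnd ℂ) (Ppol w) - w + w^2/4 + R * w/8 =
      ((1 + R/4 + R^2/64 : ℝ) : ℂ) + (((starRingEnd ℂ) w - w)/2
        + (w^2 - (starRingEnd ℂ) w ^2)/8 + (R:ℂ) * (w - (starRingEnd ℂ) w)/16) := by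
      have hc : (starRingEnd ℂ) (Ppol w) = 1 + (starRingEnd ℂ) w / 2 - (starRingEnd ℂ) w ^2/8 := by
        simp [Ppol, map_ofNat (starRingEnd ℂ) 2, map_ofNat (starRingEnd ℂ) 8]
      rw [hc]
      push_cast
      rw [hwc]
      unfold Ppol
      ring
    have z1 : (((starRingEnd ℂ) w - w)/2
        + (w^2 - (starRingEnd ℂ) w ^2)/8 + (R:ℂ) * (w - (starRingEnd ℂ) w)/16).re = 0 := by
      obtain ⟨x, y⟩ := w
      simp [sq, Complex.mul_re]
    rw [e, Complex.add_re, z1, Complex.ofReal_re, add_zero]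
  rw [h3, show ‖w‖^4 = R^2 by rw [hR]; ring]
  ring

lemma g1 {ζ : ℂ} (hζ : ‖ζ‖ ≤ 1) :
    1 + ‖ζ‖^2/4 + ‖ζ‖^4/64 ≤ ∫ u : Circle, ‖1 + ζ * u‖ ∂circleHaar := by
  set R : ℂ := ((‖ζ‖^2 : ℝ) : ℂ) with hR
  set H : ℂ → ℂ := fun u => Psi R (ζ * u) with hH
  have hn : ∀ u : ℂ, ‖u‖ ≤ 1 → Ppol (ζ * u) ≠ 0 := by
    intro u hu
    apply Ppol_ne
    rw [norm_mul]
    exact mul_le_one₀ hζ (norm_nonneg _) hu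
  have hPd : Differentiable ℂ Ppol := by unfold Ppol; fun_prop
  have hd : ∀ u : ℂ, ‖u‖ ≤ 1 → DifferentiableAt ℂ H u := by
    intro u hu
    simp only [hH, Psi]
    have h1 : DifferentiableAt ℂ (fun u => Ppol (ζ * u)) u := by fun_prop
    have h2 : DifferentiableAt ℂ (fun u : ℂ => ζ * u * (1/8 - ζ*u/64) * ((ζ*u)^2 + R*(ζ*u)/2 - R^2/8)) u := by
      fun_prop
    have h3 := h2.div h1 (hn u hu)
    have h4 : DifferentiableAt ℂ (fun u : ℂ => ζ * u) u := by fun_prop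
    exact ((h3.add h4).sub ((h4.pow 2).div_const 4)).sub ((h4.const_mul R).div_const 8)
  have hDC : DiffContOnCl ℂ H (Metric.ball 0 1) := by
    refine ⟨fun u hu => (hd u ?_).differentiableWithinAt, fun u hu => (hd u ?_).continuousAt.continuousWithinAt⟩
    · simp at hu; exact hu.le
    · rw [closure_ball _ one_ne_zero] at hu; simpa using hu
  have hHc : Continuous fun u : Circle => H u := by
    rw [continuous_iff_continuousAt]
    intro u
    have := (hd u (by rw [Circle.norm_coe])).continuousAt
    exact ContinuousAt.comp (f := fun u : Circle => (u : ℂ)) this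
      (by fun_prop : Continuous fun u : Circle => (u : ℂ)).continuousAt
  have hm := mean_value hDC hHc
  have h0 : H 0 = 0 := by simp [hH, Psi]
  rw [h0, Complex.zero_re] at hm
  have hI1 : Integrable (fun u : Circle => (H u).re) circleHaar :=
    integrable_cont (Complex.continuous_re.comp hHc)
  have hI2 : Integrable (fun u : Circle => 1 + ‖ζ‖^2/4 + ‖ζ‖^4/64 + (H u).re) circleHaar :=
    (integrable_const _).add hI1
  have hle : ∫ u : Circle, (1 + ‖ζ‖^2/4 + ‖ζ‖^4/64 + (H u).re) ∂circleHaar ≤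
      ∫ u : Circle, ‖1 + ζ * u‖ ∂circleHaar := by
    refine integral_mono hI2 (integrable_cont (by fun_prop)) fun u => ?_
    have hz : ‖ζ * (u:ℂ)‖ = ‖ζ‖ := by rw [norm_mul, Circle.norm_coe, mul_one]
    have := pointwise (w := ζ * (u : ℂ)) (by rw [hz]; exact hζ)
    rw [hz] at this
    exact this
  rw [integral_add (integrable_const _) hI1, hm, integral_const] at hle
  simpa using hle

lemma q_poly {r : ℝ} (hr : 1 ≤ r) :
    0 ≤ 0.48*r^7 - 19.2*r^5 + 64*r^4 - 62.08*r^3 + 16*r^2 + 1 := by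
  obtain ⟨s, hs, rfl⟩ : ∃ s, 0 ≤ s ∧ r = 1 + s := ⟨r - 1, by linarith, by ring⟩
  have k : 0 ≤ 31.84+18.72*s-15.2*s^2-9.12*s^3+3.36*s^4+0.48*s^5 := by
    have h0 := sq_nonneg (s - 2.05)
    have h1 := mul_nonneg hs h0
    have h2 := mul_nonneg hs h1
    have h3 := mul_nonneg hs h2
    nlinarith
  have := mul_nonneg (sq_nonneg s) k
  nlinarith

noncomputable def q (x : ℝ) : ℝ := 0.97 + 0.3*x - 0.0075*x^2

lemma g2 {α ρ : ℂ} (hα : α ≠ 0) :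
    ‖α‖ * q (‖ρ‖^2/‖α‖^2) ≤ ∫ u : Circle, ‖u * α + ρ‖ ∂circleHaar := by
  have hα0 : 0 < ‖α‖ := norm_pos_iff.2 hα
  rcases le_total ‖ρ‖ ‖α‖ with h | h
  · set ζ := (starRingEnd ℂ) (ρ/α) with hζ
    have hn : ‖ζ‖ = ‖ρ‖/‖α‖ := by rw [hζ, Complex.norm_conj, norm_div]
    have e : ∀ u : Circle, ‖u * α + ρ‖ = ‖α‖ * ‖1 + ζ * u‖ := by
      intro u
      have h1 : (u : ℂ) * α + ρ = u * α * (starRingEnd ℂ) (1 + ζ * u) := by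
        have hu : (u : ℂ) * (starRingEnd ℂ) (u : ℂ) = 1 := by
          rw [Complex.mul_conj, Circle.normSq_coe]; simp
        rw [map_add, map_mul, map_one, hζ, Complex.conj_conj]
        have e3 : α * (ρ/α) = ρ := by field_simp
        linear_combination (-ρ) * hu - (u : ℂ) * (starRingEnd ℂ) (u : ℂ) * e3
      rw [h1, norm_mul, norm_mul, Complex.norm_conj, Circle.norm_coe, one_mul]
    simp_rw [e]
    rw [integral_const_mul]
    refine mul_le_mul_of_nonneg_left ?_ hα0.le
    refine le_trans ?_ (g1 (ζ := ζ) (by rw [hn]; exact (div_le_one hα0).2 h))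
    rw [hn, ← div_pow, q, show (‖ρ‖/‖α‖)^4 = ((‖ρ‖/‖α‖)^2)^2 by ring]
    nlinarith [sq_nonneg ((‖ρ‖/‖α‖)^2 - 1.08)]
  · have hρ0 : 0 < ‖ρ‖ := hα0.trans_le h
    have hρ : ρ ≠ 0 := norm_pos_iff.1 hρ0
    have e : ∀ u : Circle, ‖u * α + ρ‖ = ‖ρ‖ * ‖1 + (α/ρ) * u‖ := by
      intro u
      rw [← norm_mul]
      congr 1
      field_simp
      ring
    simp_rw [e]
    rw [integral_const_mul]
    have h1 := g1 (ζ := α/ρ) (by rw [norm_div]; exact (div_le_one hρ0).2 h)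
    refine le_trans ?_ (mul_le_mul_of_nonneg_left h1 hρ0.le)
    rw [norm_div]
    obtain ⟨r, hr⟩ : ∃ r, r = ‖ρ‖/‖α‖ := ⟨_, rfl⟩
    have hr1 : 1 ≤ r := by rw [hr]; exact (one_le_div hα0).2 h
    have e1 : ‖ρ‖ = r * ‖α‖ := by rw [hr]; field_simp
    have e2 : ‖α‖ / (r * ‖α‖) = 1 / r := by field_simp
    have e3 : (r * ‖α‖)^2/‖α‖^2 = r^2 := by field_simp
    rw [e1, e2, e3, show r * ‖α‖ * (1 + (1/r)^2/4 + (1/r)^4/64) =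
      ‖α‖ * ((1 + (1/r)^2/4 + (1/r)^4/64) * r) by ring]
    refine mul_le_mul_of_nonneg_left ?_ hα0.le
    have h3 := q_poly hr1
    have hr0 : 0 < r := by linarith
    rw [q, ← sub_nonneg]
    have e4 : (1 + (1/r)^2/4 + (1/r)^4/64) * r - (0.97 + 0.3*r^2 - 0.0075*(r^2)^2) =
      (0.48*r^7 - 19.2*r^5 + 64*r^4 - 62.08*r^3 + 16*r^2 + 1) / (64*r^3) := by
      field_simp
      ring
    rw [e4]
    positivity

end KS

namespace KS
open MeasureTheory Set Filter Topology

lemma avg_re (c : ℂ) : ∫ u : Circle, ((u : ℂ) * c).re ∂circleHaar = 0 := by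
  have h := integral_mul_left (-1) (f := fun u : Circle => ((u : ℂ) * c).re) (by fun_prop)
  have e : ∀ u : Circle, (((-1 * u : Circle) : ℂ) * c).re = - ((u : ℂ) * c).re := by
    intro u
    simp
  simp_rw [e] at h
  rw [integral_neg] at h
  linarith

lemma avg_re_sq (c : ℂ) : ∫ u : Circle, ((u : ℂ) * c).re ^ 2 ∂circleHaar = ‖c‖^2/2 := by
  obtain ⟨v, hv⟩ := exists_polar c
  have e1 : ∀ z : Circle, ((z : ℂ) * c).re ^ 2 = ‖c‖^2 * ((v * z : Circle) : ℂ).re ^ 2 := by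
    intro z
    conv_lhs => rw [hv]
    rw [show (z : ℂ) * ((‖c‖ : ℂ) * v) = ((‖c‖ : ℝ) : ℂ) * ((v : ℂ) * z) by ring,
      Complex.re_ofReal_mul, mul_pow, Circle.coe_mul]
  simp_rw [e1]
  rw [integral_const_mul, integral_mul_left v (f := fun z : Circle => (z : ℂ).re ^ 2) (by fun_prop),
    integral_circle (by fun_prop)]
  simp_rw [exp_re]
  have := mo2
  rw [mo] at this
  rw [smul_eq_mul, this]
  ring

lemma norm_sq_expand (u : Circle) (α ρ : ℂ) :
    ‖u * α + ρ‖^2 = ‖α‖^2 + ‖ρ‖^2 + 2 * ((u : ℂ) * (α * (starRingEnd ℂ) ρ)).re := by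
  have h := Complex.normSq_add ((u : ℂ) * α) ρ
  simp only [Complex.normSq_eq_norm_sq, norm_mul, Circle.norm_coe, one_mul] at h
  rw [h, mul_assoc]

lemma avg_sq (α ρ : ℂ) : ∫ u : Circle, ‖u * α + ρ‖^2 ∂circleHaar = ‖α‖^2 + ‖ρ‖^2 := by
  simp_rw [norm_sq_expand]
  rw [integral_add (integrable_const _) (integrable_cont (by fun_prop)), integral_const_mul, avg_re]
  simp

lemma avg_four (α ρ : ℂ) : ∫ u : Circle, ‖u * α + ρ‖^4 ∂circleHaar =
    (‖α‖^2 + ‖ρ‖^2)^2 + 2 * ‖α‖^2 * ‖ρ‖^2 := by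
  set c := α * (starRingEnd ℂ) ρ
  have e : ∀ u : Circle, ‖u * α + ρ‖^4 = ((‖α‖^2 + ‖ρ‖^2)^2
      + 4 * (‖α‖^2 + ‖ρ‖^2) * ((u : ℂ) * c).re) + 4 * ((u : ℂ) * c).re ^ 2 := by
    intro u
    have := norm_sq_expand u α ρ
    rw [show ‖u * α + ρ‖^4 = (‖u * α + ρ‖^2)^2 by ring, this]
    ring
  simp_rw [e]
  rw [integral_add (integrable_cont (by fun_prop)) (integrable_cont (by fun_prop)),
    integral_add (integrable_const _) (integrable_cont (by fun_prop)), integral_const_mul,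
    integral_const_mul, avg_re, avg_re_sq]
  have : ‖c‖ = ‖α‖ * ‖ρ‖ := by simp [c]
  rw [this]
  simp
  ring

noncomputable def T {d : ℕ} (b : Fin d → ℂ) (A : Finset (Fin d)) (z : Fin d → Circle) : ℂ :=
  ∑ j ∈ A, b j * (z j : ℂ)

lemma T_cont {d : ℕ} (b : Fin d → ℂ) (A : Finset (Fin d)) : Continuous (T b A) := by
  unfold T; fun_prop

lemma T_rot {d : ℕ} (b : Fin d → ℂ) {A : Finset (Fin d)} {a : Fin d} (ha : a ∉ A)
    (z : Fin d → Circle) (u : Circle) :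
    T b (insert a A) (fun j => (if j ∈ ({a} : Finset (Fin d)) then u else 1) * z j) =
      u * (b a * z a) + T b A z := by
  rw [T, Finset.sum_insert ha, T]
  congr 1
  · simp; ring
  · refine Finset.sum_congr rfl fun j hj => ?_
    have : j ≠ a := fun h => ha (h ▸ hj)
    simp [this]

lemma norm_bz {d : ℕ} (b : Fin d → ℂ) (z : Fin d → Circle) (a : Fin d) : ‖b a * z a‖ = ‖b a‖ := by
  rw [norm_mul, Circle.norm_coe, mul_one]

lemma T_sq {d : ℕ} (b : Fin d → ℂ) (A : Finset (Fin d)) :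
    ∫ z, ‖T b A z‖^2 ∂(torusHaar d) = ∑ j ∈ A, ‖b j‖^2 := by
  induction A using Finset.induction_on with
  | empty => simp [T]
  | insert a A ha ih =>
    have hc := T_cont b (insert a A)
    have hc2 := T_cont b A
    rw [integral_rot {a} (F := fun z => ‖T b (insert a A) z‖^2) (by fun_prop)]
    simp_rw [T_rot b ha, avg_sq, norm_bz]
    rw [integral_add (integrable_const _) (integrable_cont (by fun_prop)), ih,
      Finset.sum_insert ha]
    simp

lemma T_four {d : ℕ} (b : Fin d → ℂ) (A : Finset (Fin d)) :
    ∫ z, ‖T b A z‖^4 ∂(torusHaar d) ≤ 2 * (∑ j ∈ A, ‖b j‖^2)^2 := by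
  induction A using Finset.induction_on with
  | empty => simp [T]
  | insert a A ha ih =>
    have hc := T_cont b (insert a A)
    have hc2 := T_cont b A
    rw [integral_rot {a} (F := fun z => ‖T b (insert a A) z‖^4) (by fun_prop)]
    simp_rw [T_rot b ha, avg_four, norm_bz]
    have e : ∀ z, (‖b a‖^2 + ‖T b A z‖^2)^2 + 2 * ‖b a‖^2 * ‖T b A z‖^2 =
      (‖b a‖^4 + 4 * ‖b a‖^2 * ‖T b A z‖^2) + ‖T b A z‖^4 := fun z => by ring
    simp_rw [e]
    rw [integral_add (integrable_cont (by fun_prop)) (integrable_cont (by fun_prop)),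
      integral_add (integrable_const _) (integrable_cont (by fun_prop)), integral_const_mul,
      T_sq, Finset.sum_insert ha]
    simp only [integral_const, probReal_univ, one_smul]
    nlinarith [sq_nonneg (‖b a‖^2)]

lemma final_num {x : ℝ} (h0 : 0 ≤ x) (h1 : x ≤ 1) :
    Real.sqrt Real.pi / 2 * Real.sqrt (1 + x) ≤ 0.97 + 0.285 * x := by
  have e : Real.sqrt Real.pi / 2 * Real.sqrt (1 + x) = Real.sqrt (Real.pi * (1 + x) / 4) := by
    rw [Real.sqrt_div (by positivity), Real.sqrt_mul Real.pi_pos.le,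
      show (4:ℝ) = 2^2 by norm_num, Real.sqrt_sq (by norm_num)]
    ring
  rw [e, Real.sqrt_le_left (by linarith)]
  have := Real.pi_lt_d4
  nlinarith [mul_nonneg h0 (sub_nonneg.2 h1)]

lemma caseB {d : ℕ} (b : Fin d → ℂ) (k : Fin d) (hk0 : b k ≠ 0)
    (hk : ∑ j, ‖b j‖^2 ≤ 2 * ‖b k‖^2) :
    Real.sqrt Real.pi / 2 * Real.sqrt (∑ j, ‖b j‖ ^ 2) ≤ ∫ z, ‖S b z‖ ∂(torusHaar d) := by
  classical
  set A := Finset.univ.erase k with hA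
  have hkA : k ∉ A := Finset.notMem_erase _ _
  have hins : insert k A = Finset.univ := Finset.insert_erase (Finset.mem_univ k)
  have hST : ∀ z, S b z = T b (insert k A) z := by intro z; rw [hins]; rfl
  have hc := T_cont b (insert k A)
  have hc2 := T_cont b A
  have ha : 0 < ‖b k‖ := norm_pos_iff.2 hk0
  set a := ‖b k‖ with haa
  set σ := ∑ j ∈ A, ‖b j‖^2 with hσ
  have hσ0 : 0 ≤ σ := Finset.sum_nonneg fun j _ => sq_nonneg _
  have hsum : ∑ j, ‖b j‖^2 = a^2 + σ := by
    rw [← hins, Finset.sum_insert hkA]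
  rw [hsum] at hk ⊢
  simp_rw [hST]
  rw [integral_rot {k} (F := fun z => ‖T b (insert k A) z‖) (by fun_prop)]
  simp_rw [T_rot b hkA]
  have hinner : ∀ z : Fin d → Circle, a * q (‖T b A z‖^2/a^2) ≤
      ∫ u : Circle, ‖u * (b k * z k) + T b A z‖ ∂circleHaar := by
    intro z
    have := g2 (α := b k * z k) (ρ := T b A z) (mul_ne_zero hk0 (Circle.coe_ne_zero _))
    rwa [norm_bz] at this
  set x := σ / a^2 with hx
  have hx0 : 0 ≤ x := by positivity
  have hx1 : x ≤ 1 := by rw [hx, div_le_one (by positivity)]; linarith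
  have hInt : Integrable (fun z : Fin d → Circle => ∫ u : Circle, ‖u * (b k * z k) + T b A z‖
      ∂circleHaar) (torusHaar d) := by
    have hcc : Continuous (fun p : (Fin d → Circle) × Circle =>
      ‖(p.2 : ℂ) * (b k * p.1 k) + T b A p.1‖) := by fun_prop
    exact (integrable_cont (μ := (torusHaar d).prod circleHaar) hcc).integral_prod_left
  have hqc : Continuous q := by unfold q; fun_prop
  have h1 : ∫ z, a * q (‖T b A z‖^2/a^2) ∂(torusHaar d) ≤ _ :=
    integral_mono (integrable_cont (by fun_prop)) hInt hinner
  refine le_trans ?_ h1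
  rw [integral_const_mul]
  have e : ∀ z, q (‖T b A z‖^2/a^2) = (0.97 + 0.3/a^2 * ‖T b A z‖^2) - 0.0075/a^4 * ‖T b A z‖^4 := by
    intro z
    rw [q]
    field_simp
  simp_rw [e]
  rw [integral_sub (integrable_cont (by fun_prop)) (integrable_cont (by fun_prop)),
    integral_add (integrable_const _) (integrable_cont (by fun_prop)), integral_const_mul,
    integral_const_mul, T_sq]
  simp only [integral_const, probReal_univ, one_smul]
  have h4 := T_four b A
  rw [← hσ] at h4 ⊢
  have h5 : 0.0075/a^4 * ∫ z, ‖T b A z‖^4 ∂(torusHaar d) ≤ 0.015 * x^2 := by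
    refine (mul_le_mul_of_nonneg_left h4 (by positivity)).trans (le_of_eq ?_)
    rw [hx]; field_simp; ring
  have h6 : 0.3/a^2 * σ = 0.3 * x := by rw [hx]; ring
  have h7 := final_num hx0 hx1
  have h8 : Real.sqrt (a^2 + σ) = a * Real.sqrt (1 + x) := by
    rw [show a^2 + σ = a^2 * (1 + x) by rw [hx]; field_simp, Real.sqrt_mul (by positivity),
      Real.sqrt_sq ha.le]
  rw [h8, h6, show Real.sqrt Real.pi / 2 * (a * Real.sqrt (1 + x)) =
    a * (Real.sqrt Real.pi / 2 * Real.sqrt (1 + x)) by ring]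
  refine mul_le_mul_of_nonneg_left ?_ ha.le
  nlinarith

end KS

theorem khintchine_steinhaus_L1 (d : ℕ) (hd : 1 ≤ d) (b : Fin d → ℂ) :
    Real.sqrt Real.pi / 2 * Real.sqrt (∑ j, ‖b j‖ ^ 2) ≤
      ∫ z : Fin d → Circle, ‖∑ j, b j * (z j : ℂ)‖ ∂(torusHaar d) := by
  change _ ≤ ∫ z, ‖KS.S b z‖ ∂(torusHaar d)
  by_cases h : ∀ k, 2 * ‖b k‖^2 ≤ ∑ j, ‖b j‖^2
  · rcases (Finset.sum_nonneg fun j _ => sq_nonneg ‖b j‖ :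
      0 ≤ ∑ j, ‖b j‖^2).eq_or_lt with h0 | h0
    · rw [← h0, Real.sqrt_zero, mul_zero]
      exact integral_nonneg fun z => norm_nonneg _
    · exact KS.caseA b h0 h
  · push Not at h
    obtain ⟨k, hk⟩ := h
    refine KS.caseB b k ?_ hk.le
    intro h0
    rw [h0] at hk
    have : 0 ≤ ∑ j, ‖b j‖^2 := Finset.sum_nonneg fun j _ => sq_nonneg _
    simp at hk
    linarith
end

section
/- Let p₀ = (1 − log π / log 4)^{-1}, let p > p₀ be a real number, and let C > 0. Then there exist positive integers d and m such that C · 2^{m/p} · (∫_{𝕋^d} |z₁ + z₂ + ⋯ + z_d|/√d dμ(z))^m < 1, where μ is the normalized Haar measure on 𝕋^d. (This amplification step, combined with the multiplicativity of Schatten norms, inner products and L¹ norms over independent blocks of variables, produces for each C > 0 a polynomial Hankel symbol Φ and a polynomial F with |⟨F, Φ⟩| > C · ‖H_Φ‖_{S_p} ‖F‖₁, contradicting the existence of a uniform symbol-lifting constant.) -/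
open MeasureTheory

open ProbabilityTheory Filter Topology

lemma circleHaar_integral (f : Circle → ℝ) (hf : Continuous f) :
    ∫ z, f z ∂circleHaar = (2 * Real.pi)⁻¹ * ∫ t in (0:ℝ)..(2 * Real.pi), f (Circle.exp t) := by
  have hpi := Real.pi_pos
  rw [circleHaar, integral_smul_measure, integral_map (by fun_prop)
    hf.aestronglyMeasurable, intervalIntegral.integral_of_le (by positivity)]
  simp [ENNReal.toReal_ofReal hpi.le]

instance : IsProbabilityMeasure circleHaar := by
  constructor
  have hpi := Real.pi_pos
  rw [circleHaar, Measure.smul_apply, Measure.map_apply (by fun_prop) MeasurableSet.univ]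
  simp only [Set.preimage_univ, Measure.restrict_apply_univ, Real.volume_Ioc, sub_zero, smul_eq_mul]
  exact ENNReal.inv_mul_cancel (by simp [hpi]) ENNReal.ofReal_ne_top

lemma circle_int_rot (f : Circle → ℝ) (hf : Continuous f) (c : Circle) :
    ∫ z, f (c * z) ∂circleHaar = ∫ z, f z ∂circleHaar := by
  rw [circleHaar_integral _ (by fun_prop), circleHaar_integral _ hf]
  obtain ⟨a, rfl⟩ : ∃ a, Circle.exp a = c := ⟨_, Circle.exp_arg c⟩
  congr 1
  have hper : Function.Periodic (fun t => f (Circle.exp t)) (2 * Real.pi) := by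
    intro t; simp
  have := hper.intervalIntegral_add_eq a 0
  simp only [← Circle.exp_add]
  rw [intervalIntegral.integral_comp_add_left (fun t => f (Circle.exp t))]
  simpa using this

lemma circleHaar_map (c : Circle) : circleHaar.map (fun z => c * z) = circleHaar := by
  have : IsProbabilityMeasure (circleHaar.map (fun z => c * z)) :=
    Measure.isProbabilityMeasure_map (by fun_prop)
  apply ext_of_forall_integral_eq_of_IsFiniteMeasure
  intro f
  rw [integral_map (by fun_prop) f.continuous.aestronglyMeasurable]
  exact circle_int_rot f f.continuous c

lemma int_abs_cos : ∫ t in (0:ℝ)..(2 * Real.pi), |Real.cos t| = 4 := by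
  have hpi := Real.pi_pos
  have hper : Function.Periodic (fun t => |Real.cos t|) (Real.pi) := by
    intro t; simp
  have hi : ∀ a b : ℝ, IntervalIntegrable (fun t => |Real.cos t|) volume a b := fun a b =>
    Continuous.intervalIntegrable (by fun_prop) a b
  have h1 : ∫ t in (-(Real.pi/2))..(Real.pi/2), |Real.cos t| = 2 := by
    rw [intervalIntegral.integral_congr (g := Real.cos)]
    · simp; norm_num
    · intro t ht
      rw [Set.uIcc_of_le (by linarith)] at ht
      exact abs_of_nonneg (Real.cos_nonneg_of_mem_Icc ht)
  have h2 : ∀ a : ℝ, ∫ t in a..(a+Real.pi), |Real.cos t| = 2 := by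
    intro a
    rw [hper.intervalIntegral_add_eq a (-(Real.pi/2)),
      show -(Real.pi/2) + Real.pi = Real.pi/2 by ring, h1]
  rw [← intervalIntegral.integral_add_adjacent_intervals (hi 0 Real.pi) (hi _ _)]
  have a1 := h2 0
  have a2 := h2 Real.pi
  rw [zero_add] at a1
  rw [two_mul, a1, a2]; norm_num

lemma circle_int_abs_re (w : ℂ) :
    ∫ c : Circle, |((c:ℂ) * w).re| ∂circleHaar = (2 / Real.pi) * ‖w‖ := by
  have hw : w = ‖w‖ * (Circle.exp (Complex.arg w) : ℂ) := by
    rw [Circle.coe_exp, Complex.norm_mul_exp_arg_mul_I]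
  have h1 := circle_int_rot (fun c => |(c:ℂ).re|) (by fun_prop) (Circle.exp (Complex.arg w))
  rw [circleHaar_integral _ (by fun_prop)] at h1
  rw [circleHaar_integral _ (by fun_prop)] at h1
  simp only [Circle.coe_exp, Complex.exp_ofReal_mul_I_re, int_abs_cos] at h1
  rw [← circleHaar_integral (fun z => |((Circle.exp (Complex.arg w) * z : Circle):ℂ).re|)
    (by fun_prop)] at h1
  have h2 : ∀ c : Circle, |((c:ℂ) * w).re|
      = ‖w‖ * |((Circle.exp (Complex.arg w) * c : Circle):ℂ).re| := by
    intro c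
    conv_lhs => rw [hw]
    rw [show (c:ℂ) * (‖w‖ * (Circle.exp (Complex.arg w) : ℂ))
      = (‖w‖:ℂ) * ((Circle.exp (Complex.arg w) * c : Circle):ℂ) by push_cast; ring,
      Complex.re_ofReal_mul, abs_mul, abs_norm]
  simp_rw [h2]
  rw [integral_const_mul, h1]
  field_simp; ring

lemma circle_int_re : ∫ c : Circle, (c:ℂ).re ∂circleHaar = 0 := by
  rw [circleHaar_integral _ (by fun_prop)]
  simp [Complex.exp_ofReal_mul_I_re]

lemma circle_int_re_sq : ∫ c : Circle, (c:ℂ).re ^ 2 ∂circleHaar = 1 / 2 := by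
  rw [circleHaar_integral _ (by fun_prop)]
  simp only [Circle.coe_exp, Complex.exp_ofReal_mul_I_re, integral_cos_sq]
  simp
  field_simp

/-- The infinite torus measure. -/
noncomputable def infTorus : Measure (ℕ → Circle) := Measure.infinitePi fun _ => circleHaar

instance : IsProbabilityMeasure infTorus := by unfold infTorus; infer_instance

lemma torus_int (d : ℕ) (f : (Fin d → Circle) → ℝ) (hf : Continuous f) :
    ∫ z, f z ∂(torusHaar d) = ∫ ω : ℕ → Circle, f (fun i => ω i) ∂infTorus := by
  have h := Measure.map_infinitePi_infinitePi_of_inj (P := fun _ : ℕ => circleHaar)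
    (f := fun i : Fin d => (i : ℕ)) Fin.val_injective
  rw [Measure.infinitePi_eq_pi (μ := fun _ : Fin d => circleHaar)] at h
  have hm : Measurable (fun (ω : ℕ → Circle) (i : Fin d) => ω (i : ℕ)) :=
    measurable_pi_lambda _ fun i => measurable_pi_apply (i : ℕ)
  rw [torusHaar, ← h, integral_map hm.aemeasurable
     hf.aestronglyMeasurable]
  rfl

lemma infTorus_rot (c : Circle) : infTorus.map (fun ω i => c * ω i) = infTorus := by
  unfold infTorus
  rw [Measure.infinitePi_map_pi (μ := fun _ : ℕ => circleHaar) (f := fun _ z => c * z)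
    (fun _ => by fun_prop)]
  simp_rw [circleHaar_map]

lemma circle_norm_sum_le (n : ℕ) (ω : ℕ → Circle) :
    ‖∑ k ∈ Finset.range n, (ω k : ℂ)‖ ≤ n := by
  refine (norm_sum_le (Finset.range n) (fun k => (ω k : ℂ))).trans ?_
  simp only [Circle.norm_coe, Finset.sum_const, Finset.card_range, nsmul_eq_mul, mul_one, le_refl]

lemma int_norm_eq (n : ℕ) :
    ∫ ω, ‖∑ k ∈ Finset.range n, (ω k : ℂ)‖ ∂infTorus
      = (Real.pi / 2) * ∫ ω, |∑ k ∈ Finset.range n, (ω k : ℂ).re| ∂infTorus := by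
  have hpi := Real.pi_pos
  have h1 : ∀ c : Circle, ∫ ω, |((c:ℂ) * ∑ k ∈ Finset.range n, (ω k : ℂ)).re| ∂infTorus
      = ∫ ω, |∑ k ∈ Finset.range n, (ω k : ℂ).re| ∂infTorus := by
    intro c
    conv_rhs => rw [← infTorus_rot c]
    rw [integral_map (Continuous.aemeasurable (by fun_prop))
      (Continuous.aestronglyMeasurable (by fun_prop))]
    simp [Finset.mul_sum]
  have hint : Integrable (Function.uncurry fun (c : Circle) (ω : ℕ → Circle) =>
      |((c:ℂ) * ∑ k ∈ Finset.range n, (ω k : ℂ)).re|) (circleHaar.prod infTorus) := by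
    refine Integrable.of_bound (Continuous.aestronglyMeasurable ?_) n (ae_of_all _ ?_)
    · unfold Function.uncurry; fun_prop
    · rintro ⟨c, ω⟩
      simp only [Function.uncurry, Real.norm_eq_abs, abs_abs]
      refine (Complex.abs_re_le_norm _).trans ?_
      rw [norm_mul, Circle.norm_coe, one_mul]
      exact circle_norm_sum_le n ω
  have h2 := integral_integral_swap hint
  simp only [h1, circle_int_abs_re] at h2
  rw [integral_const_mul] at h2
  simp only [integral_const, probReal_univ, one_smul] at h2
  rw [h2]; field_simp

/-- The normalized real parts. -/
noncomputable def Xv (k : ℕ) (ω : ℕ → Circle) : ℝ := Real.sqrt 2 * (ω k : ℂ).re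

lemma Xv_cont (k : ℕ) : Continuous (Xv k) := by unfold Xv; fun_prop

lemma Xv_law (g : Circle → ℝ) (hg : Continuous g) (k : ℕ) :
    ∫ ω, g (ω k) ∂infTorus = ∫ c, g c ∂circleHaar := by
  have := Measure.infinitePi_map_eval (fun _ : ℕ => circleHaar) k
  rw [← this, integral_map (measurable_pi_apply k).aemeasurable hg.aestronglyMeasurable]
  rfl

lemma Xv_mean (k : ℕ) : ∫ ω, Xv k ω ∂infTorus = 0 := by
  unfold Xv
  rw [integral_const_mul, Xv_law (fun c => (c:ℂ).re) (by fun_prop), circle_int_re, mul_zero]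

lemma Xv_sq (k : ℕ) : ∫ ω, Xv k ω ^ 2 ∂infTorus = 1 := by
  unfold Xv
  simp_rw [mul_pow]
  rw [integral_const_mul, Xv_law (fun c => (c:ℂ).re ^ 2) (by fun_prop), circle_int_re_sq,
    Real.sq_sqrt (by norm_num)]
  norm_num

lemma Xv_indep : iIndepFun Xv infTorus :=
  iIndepFun_infinitePi (P := fun _ : ℕ => circleHaar)
    (X := fun _ (c : Circle) => Real.sqrt 2 * (c : ℂ).re)
    (fun _ => Continuous.measurable (by fun_prop))

lemma Xv_ident (k : ℕ) : IdentDistrib (Xv k) (Xv 0) infTorus infTorus := by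
  refine ⟨(Xv_cont k).aemeasurable, (Xv_cont 0).aemeasurable, ?_⟩
  have hm : Measurable (fun c : Circle => Real.sqrt 2 * (c : ℂ).re) :=
    Continuous.measurable (by fun_prop)
  have h : ∀ j, infTorus.map (Xv j) = circleHaar.map (fun c : Circle => Real.sqrt 2 * (c : ℂ).re) := by
    intro j
    have := Measure.infinitePi_map_eval (fun _ : ℕ => circleHaar) j
    rw [← this, Measure.map_map hm (by fun_prop)]
    rfl
  rw [h, h]

lemma Xv_memLp (k : ℕ) : MemLp (Xv k) 2 infTorus := by
  refine MemLp.of_bound (Xv_cont k).aestronglyMeasurable (Real.sqrt 2) (ae_of_all _ fun ω => ?_)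
  unfold Xv
  rw [norm_mul, Real.norm_of_nonneg (Real.sqrt_nonneg _)]
  have := Complex.abs_re_le_norm (ω k : ℂ)
  rw [Circle.norm_coe] at this
  exact mul_le_of_le_one_right (Real.sqrt_nonneg _) this

/-- Normalized sums. -/
noncomputable def Yv (n : ℕ) (ω : ℕ → Circle) : ℝ :=
  (Real.sqrt n)⁻¹ * ∑ k ∈ Finset.range n, Xv k ω

lemma Yv_cont (n : ℕ) : Continuous (Yv n) := by
  have := Xv_cont
  unfold Yv; fun_prop

lemma Yv_memLp (n : ℕ) : MemLp (Yv n) 2 infTorus :=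
  (memLp_finsetSum _ (fun k _ => Xv_memLp k)).const_mul _

lemma Yv_sq (n : ℕ) : ∫ ω, Yv n ω ^ 2 ∂infTorus ≤ 1 := by
  have h := IndepFun.variance_sum (s := Finset.range n) (fun i _ => Xv_memLp i)
    (fun i _ j _ hij => Xv_indep.indepFun hij)
  have hv : ∀ k, variance (Xv k) infTorus = 1 := fun k => by
    rw [variance_of_integral_eq_zero (Xv_cont k).aemeasurable (Xv_mean k), Xv_sq]
  simp only [hv, Finset.sum_const, Finset.card_range, nsmul_eq_mul, mul_one] at h
  have hm : ∫ ω, (∑ k ∈ Finset.range n, Xv k) ω ∂infTorus = 0 := by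
    simp only [Finset.sum_apply]
    rw [integral_finsetSum _ (fun k _ => (Xv_memLp k).integrable (by norm_num))]
    simp [Xv_mean]
  rw [variance_of_integral_eq_zero
    (memLp_finsetSum' _ (fun k _ => Xv_memLp k)).aemeasurable hm] at h
  simp only [Finset.sum_apply] at h
  unfold Yv
  simp_rw [mul_pow]
  rw [integral_const_mul, h, inv_pow, Real.sq_sqrt (by positivity)]
  exact inv_mul_le_one

lemma Yv_clt : TendstoInDistribution Yv atTop (id : ℝ → ℝ) (fun _ => infTorus) (gaussianReal 0 1) :=
  tendstoInDistribution_inv_sqrt_mul_sum HasLaw.id (Xv_mean 0) (Xv_sq 0) Xv_indep Xv_ident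

lemma Yv_min (M : ℝ) (hM : 0 < M) :
    Tendsto (fun n => ∫ ω, min |Yv n ω| M ∂infTorus) atTop
      (𝓝 (∫ x, min |x| M ∂(gaussianReal 0 1))) := by
  have hc : Continuous (fun x : ℝ => min |x| M) := by fun_prop
  let g : BoundedContinuousFunction ℝ ℝ := BoundedContinuousFunction.ofNormedAddCommGroup
    (fun x : ℝ => min |x| M) hc M (fun x => by
      rw [Real.norm_of_nonneg (le_min (abs_nonneg _) hM.le)]; exact min_le_right _ _)
  have h := ProbabilityMeasure.tendsto_iff_forall_integral_tendsto.1 Yv_clt.tendsto g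
  simp only [ProbabilityMeasure.coe_mk, Measure.map_id] at h
  refine h.congr fun n => ?_
  rw [integral_map (Yv_cont n).aemeasurable g.continuous.aestronglyMeasurable]
  rfl

lemma Yv_abs (ε : ℝ) (hε : 0 < ε) :
    ∀ᶠ n in atTop, ∫ ω, |Yv n ω| ∂infTorus < Real.sqrt (2 / Real.pi) + ε := by
  set M : ℝ := 2 / ε with hMdef
  have hM : 0 < M := by positivity
  have hg : ∫ x, min |x| M ∂(gaussianReal 0 1) ≤ Real.sqrt (2 / Real.pi) := by
    rw [← gauss_abs]
    have hi : Integrable (fun x : ℝ => |x|) (gaussianReal 0 1) :=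
      ((memLp_id_gaussianReal (μ := 0) (v := 1) 1).integrable (by simp)).abs
    refine integral_mono_of_nonneg (ae_of_all _ fun x => le_min (abs_nonneg _) hM.le) hi
      (ae_of_all _ fun x => min_le_left _ _)
  filter_upwards [(Yv_min M hM).eventually_lt_const
    (show _ < Real.sqrt (2 / Real.pi) + ε / 2 by linarith)] with n hn
  have hi1 : Integrable (fun ω => min |Yv n ω| M) infTorus :=
    Integrable.of_bound (Continuous.aestronglyMeasurable
      (by have := Yv_cont n; fun_prop)) M (ae_of_all _ fun ω => by
      rw [Real.norm_of_nonneg (le_min (abs_nonneg _) hM.le)]; exact min_le_right _ _)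
  have hi2 : Integrable (fun ω => Yv n ω ^ 2) infTorus := (Yv_memLp n).integrable_sq
  have hle : ∫ ω, |Yv n ω| ∂infTorus ≤ ∫ ω, (min |Yv n ω| M + M⁻¹ * Yv n ω ^ 2) ∂infTorus := by
    refine integral_mono_of_nonneg (ae_of_all _ fun ω => abs_nonneg _)
      (hi1.add (hi2.const_mul _)) (ae_of_all _ fun ω => ?_)
    dsimp only
    rcases le_total |Yv n ω| M with h | h
    · rw [min_eq_left h]
      have : 0 ≤ M⁻¹ * Yv n ω ^ 2 := by positivity
      linarith
    · rw [min_eq_right h, ← sq_abs]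
      have : |Yv n ω| ≤ M⁻¹ * |Yv n ω| ^ 2 := by
        rw [inv_mul_eq_div, le_div_iff₀ hM]
        nlinarith [abs_nonneg (Yv n ω)]
      linarith
  rw [integral_add hi1 (hi2.const_mul _), integral_const_mul] at hle
  have h3 : M⁻¹ * ∫ ω, Yv n ω ^ 2 ∂infTorus ≤ ε / 2 := by
    have := mul_le_mul_of_nonneg_left (Yv_sq n) (inv_nonneg.2 hM.le)
    rw [mul_one] at this
    refine this.trans ?_
    rw [hMdef, inv_div]
  linarith

lemma torus_eq (n : ℕ) :
    ∫ z : Fin n → Circle, ‖∑ j, (z j : ℂ)‖ / Real.sqrt n ∂(torusHaar n)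
      = Real.pi / 2 * (Real.sqrt 2)⁻¹ * ∫ ω, |Yv n ω| ∂infTorus := by
  rw [torus_int n _ (by fun_prop), integral_div]
  have h : ∀ ω : ℕ → Circle, ∑ j : Fin n, (ω j : ℂ) = ∑ k ∈ Finset.range n, (ω k : ℂ) :=
    fun ω => Fin.sum_univ_eq_sum_range (fun k => (ω k : ℂ)) n
  simp_rw [h]
  rw [int_norm_eq]
  have h2 : ∀ ω, |Yv n ω|
      = ((Real.sqrt n)⁻¹ * Real.sqrt 2) * |∑ k ∈ Finset.range n, (ω k : ℂ).re| := by
    intro ω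
    unfold Yv Xv
    rw [← Finset.mul_sum, ← mul_assoc, abs_mul, abs_of_nonneg (by positivity)]
  simp_rw [h2]
  rw [integral_const_mul]
  have : Real.sqrt 2 ≠ 0 := by positivity
  field_simp

lemma limit_const : Real.pi / 2 * (Real.sqrt 2)⁻¹ * Real.sqrt (2 / Real.pi)
    = Real.sqrt Real.pi / 2 := by
  have hpi := Real.pi_pos
  rw [Real.sqrt_div (by norm_num)]
  have h1 : Real.sqrt 2 ≠ 0 := by positivity
  have h2 : Real.sqrt Real.pi ≠ 0 := by positivity
  field_simp
  rw [Real.sq_sqrt hpi.le]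

lemma exists_lt (L : ℝ) (hL : Real.sqrt Real.pi / 2 < L) : ∃ d : ℕ, 0 < d ∧
    ∫ z : Fin d → Circle, ‖∑ j, (z j : ℂ)‖ / Real.sqrt d ∂(torusHaar d) < L := by
  have hpi := Real.pi_pos
  set a := Real.pi / 2 * (Real.sqrt 2)⁻¹ with ha
  have hapos : 0 < a := by positivity
  obtain ⟨n, hn, hn0⟩ := ((Yv_abs ((L - Real.sqrt Real.pi / 2) / a)
    (div_pos (by linarith) hapos)).and (eventually_gt_atTop 0)).exists
  refine ⟨n, hn0, ?_⟩
  rw [torus_eq, ← ha]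
  have := mul_lt_mul_of_pos_left hn hapos
  rw [mul_add, limit_const, mul_div_cancel₀ _ hapos.ne'] at this
  linarith

lemma crit (p : ℝ) (hp : (1 - Real.log Real.pi / Real.log 4)⁻¹ < p) :
    Real.sqrt Real.pi / 2 < ((2 : ℝ) ^ (1 / p))⁻¹ := by
  have hpi := Real.pi_pos
  have hl2 : 0 < Real.log 2 := Real.log_pos (by norm_num)
  have hl4 : Real.log 4 = 2 * Real.log 2 := by
    rw [show (4:ℝ) = 2 ^ 2 by norm_num, Real.log_pow]; norm_num
  have hlt : Real.log Real.pi < Real.log 4 := Real.log_lt_log hpi Real.pi_lt_four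
  have hq : 0 < 1 - Real.log Real.pi / Real.log 4 := by
    rw [sub_pos, div_lt_one (by linarith)]; exact hlt
  have h1 : 1 / p < 1 - Real.log Real.pi / Real.log 4 := by
    rw [one_div]; exact inv_lt_of_inv_lt₀ hq hp
  rw [← Real.rpow_neg (by norm_num), ← Real.log_lt_log_iff (by positivity) (by positivity),
    Real.log_rpow (by norm_num), Real.log_div (by positivity) (by norm_num), Real.log_sqrt hpi.le]
  rw [hl4] at h1
  have h2 := mul_lt_mul_of_pos_right h1 hl2
  have h3 : (1 - Real.log Real.pi / (2 * Real.log 2)) * Real.log 2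
      = Real.log 2 - Real.log Real.pi / 2 := by field_simp
  rw [h3] at h2
  linarith

/-- Amplification step: if `p > p₀ = (1 - log π / log 4)⁻¹` and `C > 0`, there are
`d, m ≥ 1` with `C · 2^{m/p} · (∫_{𝕋^d} |z₁ + ⋯ + z_d|/√d dμ)^m < 1`. -/
theorem exists_dim_pow_amplification (p : ℝ)
    (hp : (1 - Real.log Real.pi / Real.log 4)⁻¹ < p) (C : ℝ) (hC : 0 < C) :
    ∃ d m : ℕ, 0 < d ∧ 0 < m ∧
      C * (2 : ℝ) ^ ((m : ℝ) / p) *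
        (∫ z : Fin d → Circle, ‖∑ j, (z j : ℂ)‖ / Real.sqrt d ∂(torusHaar d)) ^ m < 1 := by
  obtain ⟨d, hd, hlt⟩ := exists_lt _ (crit p hp)
  set I := ∫ z : Fin d → Circle, ‖∑ j, (z j : ℂ)‖ / Real.sqrt d ∂(torusHaar d) with hI
  have hI0 : 0 ≤ I := integral_nonneg fun z => by positivity
  have hpos : (0:ℝ) < (2:ℝ) ^ (1 / p) := by positivity
  have hr : (2:ℝ) ^ (1 / p) * I < 1 := by
    have := mul_lt_mul_of_pos_left hlt hpos
    rwa [mul_inv_cancel₀ hpos.ne'] at this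
  have ht := (tendsto_pow_atTop_nhds_zero_of_lt_one (by positivity) hr).const_mul C
  rw [mul_zero] at ht
  obtain ⟨m, hm, hm0⟩ := ((ht.eventually_lt_const one_pos).and (eventually_gt_atTop 0)).exists
  refine ⟨d, m, hd, hm0, ?_⟩
  rw [mul_pow, ← Real.rpow_natCast ((2:ℝ) ^ (1/p)), ← Real.rpow_mul (by norm_num)] at hm
  rw [mul_assoc, show (m:ℝ) / p = 1 / p * m by ring]
  exact hm
end
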